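/- arXiv:0907.1116 — 2 statements merged into one kernel-verified Lean document; each statement's English description precedes it below -/
import Mathlib

section
/- Let q ≥ 2 be an integer and 0 < H < 1 − 1/(2q). Then there exists a constant c_{1,q,H} > 0 (depending only on q and H) such that V_n/(c_{1,q,H} √n) converges in distribution, as n → ∞, to a standard normal random variable. -/
open MeasureTheory ProbabilityTheory Filter Real Topology

/-- A (centered) fractional Brownian motion with Hurst parameter `H`:
all finite-dimensional distributions are centered Gaussian (equivalently, every finite
linear combination of values of the process is a centered real Gaussian), with covariance
`E (B s * B t) = (s^(2H) + t^(2H) - |t-s|^(2H)) / 2` for nonnegative times. -/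
structure IsFractionalBrownianMotion {Ω : Type*} [MeasureSpace Ω]
    (B : ℝ → Ω → ℝ) (H : ℝ) : Prop where
  measurable : ∀ t : ℝ, Measurable (B t)
  gaussian_fdd : ∀ (n : ℕ) (t : Fin n → ℝ), (∀ i, 0 ≤ t i) → ∀ c : Fin n → ℝ,
    ∃ v : NNReal,
      Measure.map (fun ω => ∑ i, c i * B (t i) ω) (ℙ : Measure Ω) = gaussianReal 0 v
  covariance : ∀ s t : ℝ, 0 ≤ s → 0 ≤ t →
    ∫ ω, B s ω * B t ω ∂(ℙ : Measure Ω)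
      = (s ^ (2 * H) + t ^ (2 * H) - |t - s| ^ (2 * H)) / 2

/-- `V_n = ∑_{k=0}^{n-1} H_q (n^H (B_{(k+1)/n} - B_{k/n}))`, where `H_q` is the Hermite
polynomial of degree `q`. -/
noncomputable def hermiteVariation {Ω : Type*} [MeasureSpace Ω]
    (B : ℝ → Ω → ℝ) (H : ℝ) (q n : ℕ) (ω : Ω) : ℝ :=
  ∑ k ∈ Finset.range n,
    Polynomial.aeval
      ((n : ℝ) ^ H * (B (((k : ℝ) + 1) / n) ω - B ((k : ℝ) / n) ω))
      (Polynomial.hermite q)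

/-- Convergence in distribution of a sequence of real random variables to a law `μ`. -/
def TendstoInDistribution {Ω : Type*} [MeasureSpace Ω]
    (Z : ℕ → Ω → ℝ) (μ : Measure ℝ) : Prop :=
  ∀ f : BoundedContinuousFunction ℝ ℝ,
    Tendsto (fun n => ∫ ω, f (Z n ω) ∂(ℙ : Measure Ω)) atTop (𝓝 (∫ x, f x ∂μ))

set_option linter.unusedSectionVars false

namespace BM

/-- one-dimensional Gaussian integration by parts -/
lemma ibp_one {F : Type*} [NormedAddCommGroup F] [NormedSpace ℝ F] [CompleteSpace F]
    {f f' : ℝ → F} (hf : ∀ x, HasDerivAt f (f' x) x)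
    (h0 : Integrable f (gaussianReal 0 1)) (h1 : Integrable (fun x => x • f x) (gaussianReal 0 1))
    (h2 : Integrable f' (gaussianReal 0 1)) :
    ∫ x, x • f x ∂(gaussianReal 0 1) = ∫ x, f' x ∂(gaussianReal 0 1) := by
  have key : ∀ g : ℝ → F, Integrable g (gaussianReal 0 1) ↔
      Integrable (fun x => gaussianPDFReal 0 1 x • g x) := by
    intro g
    rw [gaussianReal_of_var_ne_zero _ one_ne_zero,
      integrable_withDensity_iff_integrable_smul₀' (by fun_prop)]
    · simp [toReal_gaussianPDF]
    · simp [gaussianPDF_lt_top]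
  rw [key] at h0 h1 h2
  rw [integral_gaussianReal_eq_integral_smul one_ne_zero,
    integral_gaussianReal_eq_integral_smul one_ne_zero]
  have hp : ∀ x, HasDerivAt (gaussianPDFReal 0 1) (-(x * gaussianPDFReal 0 1 x)) x := by
    intro x
    have : HasDerivAt (fun x : ℝ => (√(2 * π * (1:NNReal)))⁻¹ * rexp (-(x - 0) ^ 2 / (2 * (1:NNReal))))
      ((√(2 * π * (1:NNReal)))⁻¹ * (rexp (-(x - 0) ^ 2 / (2 * (1:NNReal))) *
        (-(2 * (x-0)^(2-1) * 1) / (2 * (1:NNReal))))) x := by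
      apply HasDerivAt.const_mul
      apply HasDerivAt.exp
      apply HasDerivAt.div_const
      apply HasDerivAt.neg
      exact ((hasDerivAt_id x).sub_const 0).pow 2
    rw [gaussianPDFReal_def]
    convert! this using 1
    simp
    ring
  have := integral_bilinear_hasDerivAt_right_eq_neg_left_of_integrable
    (L := ContinuousLinearMap.lsmul ℝ ℝ) (u := gaussianPDFReal 0 1) (v := f)
    (u' := fun x => -(x * gaussianPDFReal 0 1 x)) (v' := f') (fun x _ => hp x) (fun x _ => hf x)
    h2 (by
      refine h1.neg.congr (ae_of_all _ fun x => ?_)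
      simp [smul_smul, mul_comm]) h0
  simp only [ContinuousLinearMap.lsmul_apply] at this
  rw [this, ← integral_neg]
  congr with x
  simp [smul_smul, mul_comm]

lemma ibp_indep {Ω : Type*} [MeasurableSpace Ω] {P : Measure Ω} [IsProbabilityMeasure P]
    {E : Type*} [MeasurableSpace E]
    {F : Type*} [NormedAddCommGroup F] [NormedSpace ℝ F] [CompleteSpace F]
    {ξ : Ω → ℝ} {W : Ω → E} (hξ : P.map ξ = gaussianReal 0 1) (hξm : AEMeasurable ξ P)
    (hW : AEMeasurable W P)
    (hind : IndepFun ξ W P) {h h' : ℝ × E → F}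
    (hm : StronglyMeasurable h) (hm' : StronglyMeasurable h')
    (hd : ∀ x w, HasDerivAt (fun x => h (x, w)) (h' (x, w)) x)
    (h0 : Integrable (fun ω => h (ξ ω, W ω)) P)
    (h1 : Integrable (fun ω => ξ ω • h (ξ ω, W ω)) P)
    (h2 : Integrable (fun ω => h' (ξ ω, W ω)) P) :
    ∫ ω, ξ ω • h (ξ ω, W ω) ∂P = ∫ ω, h' (ξ ω, W ω) ∂P := by
  have hprod := (indepFun_iff_map_prod_eq_prod_map_map hξm hW).1 hind
  rw [hξ] at hprod
  have hpm : AEMeasurable (fun ω => (ξ ω, W ω)) P := hξm.prodMk hW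
  have hm1 : StronglyMeasurable (fun z : ℝ × E => z.1 • h z) :=
    measurable_fst.stronglyMeasurable.smul hm
  have : IsProbabilityMeasure (P.map W) := Measure.isProbabilityMeasure_map hW
  have conv : ∀ g : ℝ × E → F, StronglyMeasurable g → Integrable (fun ω => g (ξ ω, W ω)) P →
      Integrable g ((gaussianReal 0 1).prod (P.map W)) := by
    intro g hg hi
    rw [← hprod]
    exact (integrable_map_measure hg.aestronglyMeasurable hpm).2 hi
  have conv2 : ∀ g : ℝ × E → F, StronglyMeasurable g → Integrable (fun ω => g (ξ ω, W ω)) P →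
      ∫ ω, g (ξ ω, W ω) ∂P = ∫ w, ∫ x, g (x, w) ∂(gaussianReal 0 1) ∂(P.map W) := by
    intro g hg hi
    rw [← integral_map hpm (f := g) hg.aestronglyMeasurable, hprod]
    exact integral_prod_symm _ (conv g hg hi)
  have e1 := conv2 _ hm1 h1
  have e2 := conv2 _ hm' h2
  simp only at e1
  rw [e1, e2]
  apply integral_congr_ae
  filter_upwards [(conv _ hm h0).prod_left_ae, (conv _ hm1 h1).prod_left_ae,
    (conv _ hm' h2).prod_left_ae] with w a b c
  exact ibp_one (fun x => hd x w) a b c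

lemma ibp_gauss {Ω : Type*} [MeasurableSpace Ω] {P : Measure Ω} [IsProbabilityMeasure P]
    {ι : Type*} [Fintype ι]
    {F : Type*} [NormedAddCommGroup F] [NormedSpace ℝ F] [CompleteSpace F]
    {X : ι → Ω → ℝ} {ρ : ι → ι → ℝ}
    (hX : HasGaussianLaw (fun ω i => X i ω) P)
    (hmean : ∀ i, ∫ ω, X i ω ∂P = 0) (hcov : ∀ i j, ∫ ω, X i ω * X j ω ∂P = ρ i j)
    (hone : ∀ i, ρ i i = 1) (k : ι)
    {G G' : (ι → ℝ) → F} (hG : Continuous G) (hG' : Continuous G')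
    (hd : ∀ y, HasDerivAt (fun s : ℝ => G (y + s • ρ k)) (G' y) 0)
    (h0 : Integrable (fun ω => G (fun i => X i ω)) P)
    (h1 : Integrable (fun ω => X k ω • G (fun i => X i ω)) P)
    (h2 : Integrable (fun ω => G' (fun i => X i ω)) P) :
    ∫ ω, X k ω • G (fun i => X i ω) ∂P = ∫ ω, G' (fun i => X i ω) ∂P := by
  have hL2 : ∀ i, MemLp (X i) 2 P := fun i => (hX.eval i).memLp_two
  have hc : ∀ i j, cov[X i, X j; P] = ρ i j := by
    intro i j
    rw [covariance_eq_sub (hL2 i) (hL2 j), hmean, hmean]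
    simpa using hcov i j
  have hξ : P.map (X k) = gaussianReal 0 1 := by
    rw [(hX.eval k).map_eq_gaussianReal, hmean, ← covariance_self (hX.eval k).aemeasurable, hc, hone]
    simp
  let T : (ι → ℝ) →L[ℝ] (Unit → ℝ) × (ι → ℝ) :=
    (ContinuousLinearMap.pi fun _ => ContinuousLinearMap.proj k).prod
    (ContinuousLinearMap.pi fun i => ContinuousLinearMap.proj i - ρ k i • ContinuousLinearMap.proj k)
  have hind : IndepFun (fun ω (_ : Unit) => X k ω) (fun ω i => X i ω - ρ k i * X k ω) P := by
    refine HasGaussianLaw.indepFun_of_covariance_eval (X := fun _ => X k)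
      (Y := fun i ω => X i ω - ρ k i * X k ω) ?_ ?_
    · exact hX.map_fun T
    · intro _ j
      have e : (fun ω => X j ω - ρ k j * X k ω) = X j - (ρ k j • X k) := by
        ext ω; simp
      rw [e, covariance_sub_right (hL2 k) (hL2 j) ((hL2 k).const_smul _), covariance_smul_right,
        hc, hc, hone]
      simp
  have hind2 : IndepFun (X k) (fun ω i => X i ω - ρ k i * X k ω) P := by
    have m1 : Measurable (fun f : Unit → ℝ => f ()) := measurable_pi_apply ()
    have := hind.comp m1 measurable_id
    exact this
  have hXm : ∀ i, AEMeasurable (X i) P := fun i => (hX.eval i).aemeasurable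
  have e : ∀ ω, (fun i => X i ω) = (fun i => X i ω - ρ k i * X k ω) + X k ω • ρ k := by
    intro ω; ext i; simp; ring
  have := ibp_indep (P := P) hξ (hXm k)
    (W := fun ω i => X i ω - ρ k i * X k ω) (aemeasurable_pi_lambda _ fun i => by fun_prop) hind2
    (h := fun z => G (z.2 + z.1 • ρ k)) (h' := fun z => G' (z.2 + z.1 • ρ k))
    (by apply Continuous.stronglyMeasurable; fun_prop)
    (by apply Continuous.stronglyMeasurable; fun_prop)
    ?_ ?_ ?_ ?_
  · simpa only [← e] using this
  · intro x w
    have := hd (w + x • ρ k)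
    have h3 : HasDerivAt (fun s => s - x) 1 x := (hasDerivAt_id x).sub_const x
    have h4 := HasDerivAt.scomp (h := fun s => s - x) (h' := 1) (g₁ := fun s : ℝ => G ((w + x • ρ k) + s • ρ k)) (g₁' := G' (w + x • ρ k)) x (by simpa using this) h3
    convert! h4 using 1
    · ext s
      simp only [Function.comp]
      congr 1
      rw [sub_smul]; abel
    · simp
  · simpa only [← e] using h0
  · simpa only [← e] using h1
  · simpa only [← e] using h2


/-- all moments are finite -/
def AllLp {Ω : Type*} [MeasurableSpace Ω] {F : Type*} [NormedAddCommGroup F]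
    (f : Ω → F) (P : Measure Ω) : Prop := ∀ p : ℕ, MemLp f p P

section AllLp
variable {Ω : Type*} [MeasurableSpace Ω] {P : Measure Ω} [IsProbabilityMeasure P]
  {F : Type*} [NormedAddCommGroup F]

lemma AllLp.add {f g : Ω → F} (hf : AllLp f P) (hg : AllLp g P) :
    AllLp (fun ω => f ω + g ω) P := fun p => (hf p).add (hg p)

lemma AllLp.sum {κ : Type*} (s : Finset κ) {f : κ → Ω → F} (hf : ∀ i ∈ s, AllLp (f i) P) :
    AllLp (fun ω => ∑ i ∈ s, f i ω) P := fun p => memLp_finsetSum s (fun i hi => hf i hi p)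

lemma AllLp.const (c : F) : AllLp (fun _ : Ω => c) P := fun _ => memLp_const c

lemma holder_nat (p : ℕ) : ENNReal.HolderTriple ((2 * p : ℕ) : ENNReal) ((2 * p : ℕ) : ENNReal) p := by
  constructor
  push_cast
  rw [ENNReal.mul_inv (by simp) (by simp), ← add_mul, ENNReal.inv_two_add_inv_two, one_mul]

lemma AllLp.smul [NormedSpace ℝ F] {f : Ω → ℝ} {g : Ω → F} (hf : AllLp f P) (hg : AllLp g P) :
    AllLp (fun ω => f ω • g ω) P := fun p => by
  have := holder_nat p
  exact MemLp.smul (hg (2 * p)) (hf (2 * p))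

lemma AllLp.mul {f g : Ω → ℝ} (hf : AllLp f P) (hg : AllLp g P) :
    AllLp (fun ω => f ω * g ω) P := hf.smul hg

lemma AllLp.pow {f : Ω → ℝ} (hf : AllLp f P) (n : ℕ) : AllLp (fun ω => f ω ^ n) P := by
  induction n with
  | zero => simpa using AllLp.const (P := P) (1 : ℝ)
  | succ n ih => simpa only [pow_succ] using ih.mul hf

lemma AllLp.aeval {f : Ω → ℝ} (hf : AllLp f P) (p : Polynomial ℤ) :
    AllLp (fun ω => Polynomial.aeval (f ω) p) P := by
  simp only [Polynomial.aeval_eq_sum_range]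
  refine AllLp.sum _ fun i _ => ?_
  simpa [zsmul_eq_mul] using (AllLp.const (P := P) ((p.coeff i : ℤ) : ℝ)).mul (hf.pow i)

lemma AllLp.integrable {f : Ω → F} (hf : AllLp f P) : Integrable f P := by
  have := hf 1
  simpa using (memLp_one_iff_integrable.1 (by simpa using this))

end AllLp

/-- Hermite polynomial functions -/
noncomputable def He (a : ℕ) (x : ℝ) : ℝ := Polynomial.aeval x (Polynomial.hermite a)

lemma He_zero (x : ℝ) : He 0 x = 1 := by simp [He]

lemma derivative_hermite (a : ℕ) : Polynomial.derivative (Polynomial.hermite a) =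
    (a : Polynomial ℤ) * Polynomial.hermite (a - 1) := by
  induction a with
  | zero => simp
  | succ a ih =>
    rw [Polynomial.hermite_succ, Polynomial.derivative_sub, Polynomial.derivative_mul,
      Polynomial.derivative_X, ih]
    cases a with
    | zero => simp
    | succ b =>
      simp only [Nat.add_sub_cancel, Polynomial.derivative_mul, Polynomial.derivative_natCast]
      rw [Polynomial.hermite_succ b]
      push_cast
      ring

lemma He_succ (a : ℕ) (x : ℝ) : He (a + 1) x = x * He a x - a * He (a - 1) x := by
  simp [He, Polynomial.hermite_succ, derivative_hermite]

lemma He_deriv (a : ℕ) (x : ℝ) : HasDerivAt (He a) (a * He (a - 1) x) x := by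
  have := (Polynomial.hermite a).hasDerivAt_aeval (x := x) (𝕜 := ℝ)
  rw [derivative_hermite] at this
  have e : He a = fun x : ℝ => Polynomial.aeval x (Polynomial.hermite a) := rfl
  rw [e]
  simpa [He] using this

lemma He_cont (a : ℕ) : Continuous (He a) :=
  continuous_iff_continuousAt.2 fun x => (He_deriv a x).continuousAt

section gauss
variable {Ω : Type*} [MeasurableSpace Ω] {P : Measure Ω} [IsProbabilityMeasure P]

/-- standing assumption: finite centered Gaussian family with unit variances -/
structure GF {ι : Type*} [Fintype ι] (P : Measure Ω) (X : ι → Ω → ℝ) (ρ : ι → ι → ℝ) : Prop where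
  law : HasGaussianLaw (fun ω i => X i ω) P
  mean : ∀ i, ∫ ω, X i ω ∂P = 0
  cov : ∀ i j, ∫ ω, X i ω * X j ω ∂P = ρ i j
  one : ∀ i, ρ i i = 1

variable {ι : Type*} [Fintype ι] {X : ι → Ω → ℝ} {ρ : ι → ι → ℝ}

lemma GF.allLp (h : GF P X ρ) (i : ι) : AllLp (X i) P := fun p =>
  (h.law.eval i).memLp (by simp)

lemma GF.allLp_He (h : GF P X ρ) (i : ι) (a : ℕ) : AllLp (fun ω => He a (X i ω)) P :=
  (h.allLp i).aeval _

lemma GF.ibp (h : GF P X ρ) (k : ι) (a : ℕ)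
    {F : Type*} [NormedAddCommGroup F] [NormedSpace ℝ F] [CompleteSpace F]
    {G G' : (ι → ℝ) → F} (hG : Continuous G) (hG' : Continuous G')
    (hd : ∀ y, HasDerivAt (fun s : ℝ => G (y + s • ρ k)) (G' y) 0)
    (h0 : AllLp (fun ω => G (fun i => X i ω)) P)
    (h2 : AllLp (fun ω => G' (fun i => X i ω)) P) :
    ∫ ω, He (a + 1) (X k ω) • G (fun i => X i ω) ∂P
      = ∫ ω, He a (X k ω) • G' (fun i => X i ω) ∂P := by
  have hH := h.allLp_He k
  have A := (hH a).smul h0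
  have A1 := (h.allLp k).smul A
  have C := (hH a).smul h2
  have D := ((AllLp.const (P := P) (a : ℝ)).mul (hH (a - 1))).smul h0
  have B := D.add C
  have c1 := He_cont a
  have c2 := He_cont (a - 1)
  have := ibp_gauss h.law h.mean h.cov h.one k
    (G := fun y => He a (y k) • G y)
    (G' := fun y => (a * He (a - 1) (y k)) • G y + He a (y k) • G' y)
    (by fun_prop) (by fun_prop) ?_ A.integrable A1.integrable B.integrable
  · rw [integral_add D.integrable C.integrable, ← sub_eq_iff_eq_add',
      ← integral_sub A1.integrable D.integrable] at this
    rw [← this]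
    congr with ω
    rw [He_succ, sub_smul, smul_smul]
  · intro y
    have e1 : HasDerivAt (fun s : ℝ => (y + s • ρ k) k) 1 0 := by
      simp only [Pi.add_apply, Pi.smul_apply, smul_eq_mul, h.one, mul_one]
      exact (hasDerivAt_id 0).const_add _
    have e2 : HasDerivAt (fun s : ℝ => He a ((y + s • ρ k) k)) (a * He (a - 1) (y k)) 0 := by
      have := (He_deriv a ((y + (0:ℝ) • ρ k) k)).comp 0 e1
      simpa [Function.comp_def] using this
    have := e2.smul (hd y)
    convert! this using 1
    simp [add_comm]

end gauss

/-- recursion satisfied by fourfold Hermite moments -/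
structure Rec (M : ℕ → ℕ → ℕ → ℕ → ℝ) (r1 r2 r3 r4 r5 r6 : ℝ) : Prop where
  zero : M 0 0 0 0 = 1
  ra : ∀ a b c d, M (a + 1) b c d = r1 * b * M a (b - 1) c d + r2 * c * M a b (c - 1) d
    + r3 * d * M a b c (d - 1)
  rb : ∀ b c d, M 0 (b + 1) c d = r4 * c * M 0 b (c - 1) d + r5 * d * M 0 b c (d - 1)
  rc : ∀ c d, M 0 0 (c + 1) d = r6 * d * M 0 0 c (d - 1)
  rd : ∀ d, M 0 0 0 (d + 1) = 0

/-- the monomial attached to a multigraph on four vertices -/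
def mono (r1 r2 r3 r4 r5 r6 : ℝ) (e1 e2 e3 e4 e5 e6 : ℕ) : ℝ :=
  |r1| ^ e1 * |r2| ^ e2 * |r3| ^ e3 * |r4| ^ e4 * |r5| ^ e5 * |r6| ^ e6

/-- the multigraph bound -/
def Bd (r1 r2 r3 r4 r5 r6 : ℝ) (a b c d : ℕ) (y T : ℝ) : Prop :=
  ∀ e1 e2 e3 e4 e5 e6 : ℕ, e1 + e2 + e3 = a → e1 + e4 + e5 = b → e2 + e4 + e6 = c →
    e3 + e5 + e6 = d → y * mono r1 r2 r3 r4 r5 r6 e1 e2 e3 e4 e5 e6 ≤ T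

/-- the connected multigraph bound -/
def Bdc (r1 r2 r3 r4 r5 r6 : ℝ) (a b c d : ℕ) (y T : ℝ) : Prop :=
  ∀ e1 e2 e3 e4 e5 e6 : ℕ, e1 + e2 + e3 = a → e1 + e4 + e5 = b → e2 + e4 + e6 = c →
    e3 + e5 + e6 = d → 0 < e2 + e3 + e4 + e5 →
    y * mono r1 r2 r3 r4 r5 r6 e1 e2 e3 e4 e5 e6 ≤ T

/-- uniform bound at given degrees -/
def UB (a b c d : ℕ) (C : ℝ) : Prop :=
  ∀ (M : ℕ → ℕ → ℕ → ℕ → ℝ) (r1 r2 r3 r4 r5 r6 : ℝ), Rec M r1 r2 r3 r4 r5 r6 →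
    ∀ y T : ℝ, 0 ≤ y → 0 ≤ T → Bd r1 r2 r3 r4 r5 r6 a b c d y T → y * |M a b c d| ≤ C * T

lemma abs_add3 (y a b c A B C T : ℝ) (hy : 0 ≤ y) (ha : y * |a| ≤ A * T)
    (hb : y * |b| ≤ B * T) (hc : y * |c| ≤ C * T) : y * |a + b + c| ≤ (A + B + C) * T := by
  have h1 : |a + b + c| ≤ |a| + |b| + |c| := abs_add_three a b c
  have := mul_le_mul_of_nonneg_left h1 hy
  linarith

lemma term_bd (y r m C T : ℝ) (n : ℕ) (h : (y * |r|) * |m| ≤ C * T) :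
    y * |r * n * m| ≤ (n * C) * T := by
  rw [abs_mul, abs_mul, Nat.abs_cast]
  have := mul_le_mul_of_nonneg_left h (Nat.cast_nonneg (α := ℝ) n)
  linarith

lemma UBd (d : ℕ) : ∃ C, 0 ≤ C ∧ UB 0 0 0 d C := by
  refine ⟨1, by norm_num, ?_⟩
  intro M r1 r2 r3 r4 r5 r6 h y T hy hT hB
  cases d with
  | zero =>
    rw [h.zero]
    have := hB 0 0 0 0 0 0 rfl rfl rfl rfl
    simpa [mono] using this
  | succ d => rw [h.rd]; simpa using hT

lemma UBc (c : ℕ) : ∀ d, ∃ C, 0 ≤ C ∧ UB 0 0 c d C := by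
  induction c with
  | zero => exact UBd
  | succ c ih =>
    intro d
    obtain ⟨C, hC, h⟩ := ih (d - 1)
    refine ⟨d * C, by positivity, ?_⟩
    intro M r1 r2 r3 r4 r5 r6 hM y T hy hT hB
    rw [hM.rc]
    rcases Nat.eq_zero_or_pos d with rfl | hd
    · simp
    apply term_bd
    apply h M _ _ _ _ _ _ hM _ _ (by positivity) hT
    intro e1 e2 e3 e4 e5 e6 q1 q2 q3 q4
    have := hB e1 e2 e3 e4 e5 (e6 + 1) (by omega) (by omega) (by omega) (by omega)
    refine le_trans (le_of_eq ?_) this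
    simp only [mono]; ring

lemma UBb (b : ℕ) : ∀ c d, ∃ C, 0 ≤ C ∧ UB 0 b c d C := by
  induction b with
  | zero => exact UBc
  | succ b ih =>
    intro c d
    obtain ⟨C, hC, h⟩ := ih (c - 1) d
    obtain ⟨C', hC', h'⟩ := ih c (d - 1)
    refine ⟨c * C + d * C' + 0, by positivity, ?_⟩
    intro M r1 r2 r3 r4 r5 r6 hM y T hy hT hB
    rw [hM.rb, ← add_zero (_ + _)]
    apply abs_add3 _ _ _ _ _ _ _ _ hy
    · rcases Nat.eq_zero_or_pos c with rfl | hd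
      · simp
      apply term_bd
      apply h M _ _ _ _ _ _ hM _ _ (by positivity) hT
      intro e1 e2 e3 e4 e5 e6 q1 q2 q3 q4
      have := hB e1 e2 e3 (e4 + 1) e5 e6 (by omega) (by omega) (by omega) (by omega)
      refine le_trans (le_of_eq ?_) this
      simp only [mono]; ring
    · rcases Nat.eq_zero_or_pos d with rfl | hd
      · simp
      apply term_bd
      apply h' M _ _ _ _ _ _ hM _ _ (by positivity) hT
      intro e1 e2 e3 e4 e5 e6 q1 q2 q3 q4
      have := hB e1 e2 e3 e4 (e5 + 1) e6 (by omega) (by omega) (by omega) (by omega)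
      refine le_trans (le_of_eq ?_) this
      simp only [mono]; ring
    · simp

lemma UBa (a : ℕ) : ∀ b c d, ∃ C, 0 ≤ C ∧ UB a b c d C := by
  induction a with
  | zero => exact UBb
  | succ a ih =>
    intro b c d
    obtain ⟨C, hC, h⟩ := ih (b - 1) c d
    obtain ⟨C', hC', h'⟩ := ih b (c - 1) d
    obtain ⟨Ctwo, hCtwo, htwo⟩ := ih b c (d - 1)
    refine ⟨b * C + c * C' + d * Ctwo, by positivity, ?_⟩
    intro M r1 r2 r3 r4 r5 r6 hM y T hy hT hB
    rw [hM.ra]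
    apply abs_add3 _ _ _ _ _ _ _ _ hy
    · rcases Nat.eq_zero_or_pos b with rfl | hd
      · simp
      apply term_bd
      apply h M _ _ _ _ _ _ hM _ _ (by positivity) hT
      intro e1 e2 e3 e4 e5 e6 q1 q2 q3 q4
      have := hB (e1 + 1) e2 e3 e4 e5 e6 (by omega) (by omega) (by omega) (by omega)
      refine le_trans (le_of_eq ?_) this
      simp only [mono]; ring
    · rcases Nat.eq_zero_or_pos c with rfl | hd
      · simp
      apply term_bd
      apply h' M _ _ _ _ _ _ hM _ _ (by positivity) hT
      intro e1 e2 e3 e4 e5 e6 q1 q2 q3 q4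
      have := hB e1 (e2 + 1) e3 e4 e5 e6 (by omega) (by omega) (by omega) (by omega)
      refine le_trans (le_of_eq ?_) this
      simp only [mono]; ring
    · rcases Nat.eq_zero_or_pos d with rfl | hd
      · simp
      apply term_bd
      apply htwo M _ _ _ _ _ _ hM _ _ (by positivity) hT
      intro e1 e2 e3 e4 e5 e6 q1 q2 q3 q4
      have := hB e1 e2 (e3 + 1) e4 e5 e6 (by omega) (by omega) (by omega) (by omega)
      refine le_trans (le_of_eq ?_) this
      simp only [mono]; ring

/-- recursion satisfied by the covariance of products -/
structure RecK (M K : ℕ → ℕ → ℕ → ℕ → ℝ) (r1 r2 r3 r4 r5 r6 : ℝ) : Prop where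
  rm : Rec M r1 r2 r3 r4 r5 r6
  ka : ∀ a b c d, K (a + 1) b c d = r1 * b * K a (b - 1) c d + r2 * c * M a b (c - 1) d
    + r3 * d * M a b c (d - 1)
  kb : ∀ b c d, K 0 (b + 1) c d = r4 * c * M 0 b (c - 1) d + r5 * d * M 0 b c (d - 1)
  kc : ∀ c d, K 0 0 c d = 0

/-- uniform bound for the covariance -/
def UBK (a b c d : ℕ) (C : ℝ) : Prop :=
  ∀ (M K : ℕ → ℕ → ℕ → ℕ → ℝ) (r1 r2 r3 r4 r5 r6 : ℝ), RecK M K r1 r2 r3 r4 r5 r6 →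
    ∀ y T : ℝ, 0 ≤ y → 0 ≤ T → Bdc r1 r2 r3 r4 r5 r6 a b c d y T → y * |K a b c d| ≤ C * T

lemma UBKb (b : ℕ) : ∀ c d, ∃ C, 0 ≤ C ∧ UBK 0 b c d C := by
  cases b with
  | zero =>
    intro c d
    refine ⟨0, le_rfl, ?_⟩
    intro M K r1 r2 r3 r4 r5 r6 hM y T hy hT hB
    rw [hM.kc]; simp
  | succ b =>
    intro c d
    obtain ⟨C, hC, h⟩ := UBb b (c - 1) d
    obtain ⟨C', hC', h'⟩ := UBb b c (d - 1)
    refine ⟨c * C + d * C' + 0, by positivity, ?_⟩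
    intro M K r1 r2 r3 r4 r5 r6 hM y T hy hT hB
    rw [hM.kb, ← add_zero (_ + _)]
    apply abs_add3 _ _ _ _ _ _ _ _ hy
    · rcases Nat.eq_zero_or_pos c with rfl | hd
      · simp
      apply term_bd
      apply h M _ _ _ _ _ _ hM.rm _ _ (by positivity) hT
      intro e1 e2 e3 e4 e5 e6 q1 q2 q3 q4
      have := hB e1 e2 e3 (e4 + 1) e5 e6 (by omega) (by omega) (by omega) (by omega) (by omega)
      refine le_trans (le_of_eq ?_) this
      simp only [mono]; ring
    · rcases Nat.eq_zero_or_pos d with rfl | hd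
      · simp
      apply term_bd
      apply h' M _ _ _ _ _ _ hM.rm _ _ (by positivity) hT
      intro e1 e2 e3 e4 e5 e6 q1 q2 q3 q4
      have := hB e1 e2 e3 e4 (e5 + 1) e6 (by omega) (by omega) (by omega) (by omega) (by omega)
      refine le_trans (le_of_eq ?_) this
      simp only [mono]; ring
    · simp

lemma UBKa (a : ℕ) : ∀ b c d, ∃ C, 0 ≤ C ∧ UBK a b c d C := by
  induction a with
  | zero => exact UBKb
  | succ a ih =>
    intro b c d
    obtain ⟨C, hC, h⟩ := ih (b - 1) c d
    obtain ⟨C', hC', h'⟩ := UBa a b (c - 1) d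
    obtain ⟨Ctwo, hCtwo, htwo⟩ := UBa a b c (d - 1)
    refine ⟨b * C + c * C' + d * Ctwo, by positivity, ?_⟩
    intro M K r1 r2 r3 r4 r5 r6 hM y T hy hT hB
    rw [hM.ka]
    apply abs_add3 _ _ _ _ _ _ _ _ hy
    · rcases Nat.eq_zero_or_pos b with rfl | hd
      · simp
      apply term_bd
      apply h M K _ _ _ _ _ _ hM _ _ (by positivity) hT
      intro e1 e2 e3 e4 e5 e6 q1 q2 q3 q4 q5
      have := hB (e1 + 1) e2 e3 e4 e5 e6 (by omega) (by omega) (by omega) (by omega) (by omega)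
      refine le_trans (le_of_eq ?_) this
      simp only [mono]; ring
    · rcases Nat.eq_zero_or_pos c with rfl | hd
      · simp
      apply term_bd
      apply h' M _ _ _ _ _ _ hM.rm _ _ (by positivity) hT
      intro e1 e2 e3 e4 e5 e6 q1 q2 q3 q4
      have := hB e1 (e2 + 1) e3 e4 e5 e6 (by omega) (by omega) (by omega) (by omega) (by omega)
      refine le_trans (le_of_eq ?_) this
      simp only [mono]; ring
    · rcases Nat.eq_zero_or_pos d with rfl | hd
      · simp
      apply term_bd
      apply htwo M _ _ _ _ _ _ hM.rm _ _ (by positivity) hT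
      intro e1 e2 e3 e4 e5 e6 q1 q2 q3 q4
      have := hB e1 e2 (e3 + 1) e4 e5 e6 (by omega) (by omega) (by omega) (by omega) (by omega)
      refine le_trans (le_of_eq ?_) this
      simp only [mono]; ring

/-- the exponents of connected regular multigraphs -/
def expo (p : ℕ) : Finset (ℕ × ℕ × ℕ) :=
  (Finset.range (p + 1) ×ˢ Finset.range (p + 1) ×ˢ Finset.range (p + 1)).filter
    (fun e => e.1 + e.2.1 + e.2.2 = p ∧ 0 < e.2.1 + e.2.2)

lemma K_bound (p : ℕ) : ∃ C, 0 ≤ C ∧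
    ∀ (M K : ℕ → ℕ → ℕ → ℕ → ℝ) (r1 r2 r3 r4 r5 r6 : ℝ), RecK M K r1 r2 r3 r4 r5 r6 →
    |K p p p p| ≤ C * ∑ e ∈ expo p, (|r1| * |r6|) ^ e.1 * (|r2| * |r5|) ^ e.2.1
      * (|r3| * |r4|) ^ e.2.2 := by
  obtain ⟨C, hC, h⟩ := UBKa p p p p
  refine ⟨C, hC, ?_⟩
  intro M K r1 r2 r3 r4 r5 r6 hM
  have hT : 0 ≤ ∑ e ∈ expo p, (|r1| * |r6|) ^ e.1 * (|r2| * |r5|) ^ e.2.1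
      * (|r3| * |r4|) ^ e.2.2 := Finset.sum_nonneg fun _ _ => by positivity
  have := h M K r1 r2 r3 r4 r5 r6 hM 1 _ zero_le_one hT ?_
  · simpa using this
  intro e1 e2 e3 e4 e5 e6 q1 q2 q3 q4 q5
  obtain rfl : e5 = e2 := by omega
  obtain rfl : e4 = e3 := by omega
  obtain rfl : e6 = e1 := by omega
  have hmem : (e6, e5, e4) ∈ expo p := by
    simp only [expo, Finset.mem_filter, Finset.mem_product, Finset.mem_range]
    omega
  refine le_trans (le_of_eq ?_) (Finset.single_le_sum
    (f := fun e : ℕ × ℕ × ℕ => (|r1| * |r6|) ^ e.1 * (|r2| * |r5|) ^ e.2.1 * (|r3| * |r4|) ^ e.2.2)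
    (fun _ _ => by positivity) hmem)
  simp only [mono]; ring

section moments
variable {Ω : Type*} [MeasurableSpace Ω] {P : Measure Ω} [IsProbabilityMeasure P]
variable {ι : Type*} [Fintype ι] {X : ι → Ω → ℝ} {ρ : ι → ι → ℝ}

lemma GF.comp {κ : Type*} [Fintype κ] (h : GF P X ρ) (f : κ → ι) :
    GF P (fun a => X (f a)) (fun a b => ρ (f a) (f b)) where
  law := h.law.map_fun (ContinuousLinearMap.pi fun a => ContinuousLinearMap.proj (f a))
  mean _ := h.mean _
  cov _ _ := h.cov _ _
  one _ := h.one _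

lemma GF.symm (h : GF P X ρ) (i j : ι) : ρ i j = ρ j i := by
  rw [← h.cov, ← h.cov]; simp only [mul_comm]

/-- fourfold Hermite moment -/
noncomputable def Mom (P : Measure Ω) (X : ι → Ω → ℝ) (i j k l : ι) (a b c d : ℕ) : ℝ :=
  ∫ ω, He a (X i ω) * (He b (X j ω) * He c (X k ω) * He d (X l ω)) ∂P

lemma Mom_succ (h : GF P X ρ) (i j k l : ι) (a b c d : ℕ) :
    Mom P X i j k l (a + 1) b c d = ρ i j * b * Mom P X i j k l a (b - 1) c d
      + ρ i k * c * Mom P X i j k l a b (c - 1) d + ρ i l * d * Mom P X i j k l a b c (d - 1) := by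
  have h4 := h.comp (![i, j, k, l])
  have cH := He_cont
  have q1 := h.allLp_He i
  have q2 := h.allLp_He j
  have q3 := h.allLp_He k
  have q4 := h.allLp_He l
  have t1 := (((AllLp.const (P := P) (ρ i j * b)).mul (q2 (b - 1))).mul (q3 c)).mul (q4 d)
  have t2 := (((AllLp.const (P := P) (ρ i k * c)).mul (q2 b)).mul (q3 (c - 1))).mul (q4 d)
  have t3 := (((AllLp.const (P := P) (ρ i l * d)).mul (q2 b)).mul (q3 c)).mul (q4 (d - 1))
  have := h4.ibp 0 a (G := fun y => He b (y 1) * He c (y 2) * He d (y 3))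
    (G' := fun y => ρ i j * b * He (b - 1) (y 1) * He c (y 2) * He d (y 3)
      + ρ i k * c * He b (y 1) * He (c - 1) (y 2) * He d (y 3)
      + ρ i l * d * He b (y 1) * He c (y 2) * He (d - 1) (y 3))
    (by fun_prop) (by fun_prop) ?_ ?_ ?_
  · simp only [Mom]
    simp only [Matrix.cons_val_zero, Matrix.cons_val_one, Matrix.cons_val, smul_eq_mul] at this
    rw [this]
    rw [← integral_const_mul, ← integral_const_mul, ← integral_const_mul]
    have s1 := (AllLp.const (P := P) (ρ i j * b)).mul ((q1 a).mul (((q2 (b - 1)).mul (q3 c)).mul (q4 d)))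
    have s2 := (AllLp.const (P := P) (ρ i k * c)).mul ((q1 a).mul (((q2 b).mul (q3 (c - 1))).mul (q4 d)))
    have s3 := (AllLp.const (P := P) (ρ i l * d)).mul ((q1 a).mul (((q2 b).mul (q3 c)).mul (q4 (d - 1))))
    rw [← integral_add s1.integrable s2.integrable, ← integral_add (s1.add s2).integrable s3.integrable]
    congr with ω
    ring
  · intro y
    have L : ∀ (m : Fin 4) (a : ℕ), HasDerivAt
        (fun s : ℝ => He a ((y + s • fun b => ρ (![i, j, k, l] 0) (![i, j, k, l] b)) m))
        (a * He (a - 1) (y m) * ρ i (![i, j, k, l] m)) 0 := by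
      intro m a
      have e1 : HasDerivAt (fun s : ℝ => (y + s • fun b => ρ (![i, j, k, l] 0) (![i, j, k, l] b)) m)
          (ρ i (![i, j, k, l] m)) 0 := by
        simp only [Pi.add_apply, Pi.smul_apply, smul_eq_mul]
        simpa using ((hasDerivAt_id (0:ℝ)).mul_const (ρ i (![i, j, k, l] m))).const_add (y m)
      have := (He_deriv a ((y + (0:ℝ) • fun b => ρ (![i, j, k, l] 0) (![i, j, k, l] b)) m)).comp 0 e1
      simpa [Function.comp_def] using this
    have := ((L 1 b).mul (L 2 c)).mul (L 3 d)
    convert! this using 1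
    simp
    ring
  · exact ((q2 b).mul (q3 c)).mul (q4 d)
  · exact (t1.add t2).add t3

lemma Mom_Rec (h : GF P X ρ) (i j k l : ι) :
    Rec (Mom P X i j k l) (ρ i j) (ρ i k) (ρ i l) (ρ j k) (ρ j l) (ρ k l) where
  zero := by simp [Mom, He_zero]
  ra := Mom_succ h i j k l
  rb b c d := by
    have s : ∀ b c d, Mom P X i j k l 0 b c d = Mom P X j i k l b 0 c d := by
      intro b c d
      simp only [Mom]; congr with ω; ring
    rw [s, Mom_succ h]
    simp [s]
  rc c d := by
    have s : ∀ c d, Mom P X i j k l 0 0 c d = Mom P X k j i l c 0 0 d := by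
      intro c d
      simp only [Mom]; congr with ω; ring
    rw [s, Mom_succ h]
    simp [s]
  rd d := by
    have s : ∀ d, Mom P X i j k l 0 0 0 d = Mom P X l j k i d 0 0 0 := by
      intro d
      simp only [Mom]; congr with ω; ring
    rw [s, Mom_succ h]
    simp

/-- twofold moments -/
noncomputable def Mom2 (P : Measure Ω) (X : ι → Ω → ℝ) (i j : ι) (a b : ℕ) : ℝ :=
  ∫ ω, He a (X i ω) * He b (X j ω) ∂P

lemma Mom2_eq (i j : ι) (a b : ℕ) : Mom2 P X i j a b = Mom P X i j i i a b 0 0 := by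
  simp [Mom, Mom2, He_zero]

lemma Mom2_succ (h : GF P X ρ) (i j : ι) (a b : ℕ) :
    Mom2 P X i j (a + 1) b = ρ i j * b * Mom2 P X i j a (b - 1) := by
  simp only [Mom2_eq]
  rw [Mom_succ h]; simp

lemma Mom2_zero (h : GF P X ρ) (i j : ι) (b : ℕ) : Mom2 P X i j 0 (b + 1) = 0 := by
  rw [Mom2_eq, (Mom_Rec h i j i i).rb]; simp

lemma Mom2_diag (h : GF P X ρ) (i j : ι) (p : ℕ) :
    Mom2 P X i j p p = p.factorial * ρ i j ^ p := by
  induction p with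
  | zero => simp [Mom2, He_zero]
  | succ p ih =>
    rw [Mom2_succ h, Nat.add_sub_cancel, ih, Nat.factorial_succ]
    push_cast; ring

lemma Mom_RecK (h : GF P X ρ) (i j k l : ι) :
    RecK (Mom P X i j k l)
      (fun a b c d => Mom P X i j k l a b c d - Mom2 P X i j a b * Mom2 P X k l c d)
      (ρ i j) (ρ i k) (ρ i l) (ρ j k) (ρ j l) (ρ k l) where
  rm := Mom_Rec h i j k l
  ka a b c d := by rw [Mom_succ h, Mom2_succ h]; ring
  kb b c d := by rw [(Mom_Rec h i j k l).rb, Mom2_zero h]; ring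
  kc c d := by
    have : Mom2 P X i j 0 0 = 1 := by simp [Mom2, He_zero]
    rw [this]
    simp [Mom, Mom2, He_zero]

end moments

section stein
variable {Ω : Type*} [MeasurableSpace Ω] {P : Measure Ω} [IsProbabilityMeasure P]
variable {ι : Type*} [Fintype ι] {X : ι → Ω → ℝ} {ρ : ι → ι → ℝ}

/-- the Hermite variation -/
noncomputable def Vv (X : ι → Ω → ℝ) (q : ℕ) (ω : Ω) : ℝ := ∑ i, He q (X i ω)

/-- the carre du champ -/
noncomputable def Gam (X : ι → Ω → ℝ) (ρ : ι → ι → ℝ) (p : ℕ) (ω : Ω) : ℝ :=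
  (p + 1) * ∑ i, ∑ j, ρ i j * (He p (X i ω) * He p (X j ω))

lemma Vv_allLp (h : GF P X ρ) (q : ℕ) : AllLp (Vv X q) P :=
  AllLp.sum _ fun i _ => h.allLp_He i q

lemma Gam_allLp (h : GF P X ρ) (p : ℕ) : AllLp (Gam X ρ p) P :=
  (AllLp.const (P := P) ((p : ℝ) + 1)).mul (AllLp.sum _ fun i _ => AllLp.sum _ fun j _ =>
    (AllLp.const (ρ i j)).mul ((h.allLp_He i p).mul (h.allLp_He j p)))

lemma exp_allLp {f : Ω → ℝ} (hf : AEStronglyMeasurable f P) (t : ℝ) (c : ℂ) :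
    AllLp (fun ω => c * Complex.exp (Complex.I * t * (f ω : ℂ))) P := by
  intro p
  refine MemLp.of_bound ?_ ‖c‖ (ae_of_all _ fun ω => ?_)
  · have := Complex.continuous_ofReal.comp_aestronglyMeasurable hf
    exact ((Complex.continuous_exp.comp_aestronglyMeasurable (this.const_mul _))).const_mul c
  · rw [norm_mul]
    have : Complex.I * t * (f ω : ℂ) = ((t * f ω : ℝ) : ℂ) * Complex.I := by push_cast; ring
    rw [this, Complex.norm_exp_ofReal_mul_I, mul_one]

lemma stein (h : GF P X ρ) (p : ℕ) (t : ℝ) :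
    ∫ ω, Vv X (p + 1) ω • Complex.exp (Complex.I * t * (Vv X (p + 1) ω : ℂ)) ∂P
      = ∫ ω, Gam X ρ p ω • (Complex.I * t * Complex.exp (Complex.I * t * (Vv X (p + 1) ω : ℂ))) ∂P := by
  have cH := He_cont
  have hVm : AEStronglyMeasurable (Vv X (p + 1)) P := (Vv_allLp h (p + 1) 1).aestronglyMeasurable
  have eA := exp_allLp hVm t 1
  simp only [one_mul] at eA
  have eB := exp_allLp hVm t (Complex.I * t)
  have key : ∀ k, ∫ ω, He (p + 1) (X k ω) • Complex.exp (Complex.I * t * (Vv X (p + 1) ω : ℂ)) ∂P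
      = ∫ ω, He p (X k ω) • ((∑ l, (p + 1) * He p (X l ω) * ρ k l) •
        (Complex.I * t * Complex.exp (Complex.I * t * (Vv X (p + 1) ω : ℂ)))) ∂P := by
    intro k
    refine h.ibp k p (G := fun y => Complex.exp (Complex.I * t * ((∑ i, He (p + 1) (y i) : ℝ) : ℂ)))
      (G' := fun y => (∑ l, (p + 1) * He p (y l) * ρ k l) •
        (Complex.I * t * Complex.exp (Complex.I * t * ((∑ i, He (p + 1) (y i) : ℝ) : ℂ))))
      (by fun_prop) (by fun_prop) ?_ ?_ ?_
    · intro y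
      have L : ∀ m : ι, HasDerivAt (fun s : ℝ => He (p + 1) ((y + s • ρ k) m))
          ((p + 1) * He p (y m) * ρ k m) 0 := by
        intro m
        have e1 : HasDerivAt (fun s : ℝ => (y + s • ρ k) m) (ρ k m) 0 := by
          simp only [Pi.add_apply, Pi.smul_apply, smul_eq_mul]
          simpa using ((hasDerivAt_id (0:ℝ)).mul_const (ρ k m)).const_add (y m)
        have := (He_deriv (p + 1) ((y + (0:ℝ) • ρ k) m)).comp 0 e1
        simpa [Function.comp_def] using this
      have S := HasDerivAt.fun_sum (u := Finset.univ) fun m _ => L m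
      have S2 := ((S.ofReal_comp).const_mul (Complex.I * (t : ℂ))).cexp
      convert! S2 using 1
      simp only [zero_smul, add_zero, Complex.real_smul]
      push_cast
      ring
    · exact eA
    · exact (AllLp.sum _ fun l _ => ((AllLp.const (P := P) ((p : ℝ) + 1)).mul (h.allLp_He l p)).mul
        (AllLp.const (ρ k l))).smul eB
  have e1 : ∀ ω, Vv X (p + 1) ω • Complex.exp (Complex.I * t * (Vv X (p + 1) ω : ℂ))
      = ∑ k, He (p + 1) (X k ω) • Complex.exp (Complex.I * t * (Vv X (p + 1) ω : ℂ)) := by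
    intro ω
    rw [← Finset.sum_smul]; rfl
  simp_rw [e1]
  rw [integral_finsetSum _ fun k _ => ((h.allLp_He k (p + 1)).smul eA).integrable]
  simp_rw [key]
  rw [← integral_finsetSum _ fun k _ => ((h.allLp_He k p).smul ((AllLp.sum _ fun l _ =>
    ((AllLp.const (P := P) ((p : ℝ) + 1)).mul (h.allLp_He l p)).mul
        (AllLp.const (ρ k l))).smul eB)).integrable]
  congr with ω
  simp_rw [smul_smul]
  rw [← Finset.sum_smul]
  congr 1
  rw [Gam, Finset.mul_sum]
  refine Finset.sum_congr rfl fun i _ => ?_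
  rw [Finset.mul_sum, Finset.mul_sum]
  refine Finset.sum_congr rfl fun j _ => ?_
  ring

lemma phi_deriv {V : Ω → ℝ} (hV : AllLp V P) (t : ℝ) :
    HasDerivAt (fun t : ℝ => ∫ ω, Complex.exp (Complex.I * t * (V ω : ℂ)) ∂P)
      (∫ ω, Complex.I * (V ω • Complex.exp (Complex.I * t * (V ω : ℂ))) ∂P) t := by
  have hVm : AEStronglyMeasurable V P := (hV 1).aestronglyMeasurable
  have eA : ∀ t : ℝ, AllLp (fun ω => Complex.exp (Complex.I * t * (V ω : ℂ))) P := fun t => by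
    simpa only [one_mul] using exp_allLp hVm t 1
  refine (hasDerivAt_integral_of_dominated_loc_of_deriv_le (μ := P) (bound := fun ω => |V ω|)
    (F := fun (t : ℝ) ω => Complex.exp (Complex.I * t * (V ω : ℂ)))
    (F' := fun (t : ℝ) ω => Complex.I * (V ω • Complex.exp (Complex.I * t * (V ω : ℂ))))
    (Filter.univ_mem (f := 𝓝 t)) ?_ ?_ ?_ ?_ ?_ ?_).2
  · exact Eventually.of_forall fun t => (eA t).integrable.aestronglyMeasurable
  · exact (eA t).integrable
  · exact ((hV.smul (eA t)).integrable.const_mul _).aestronglyMeasurable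
  · refine ae_of_all _ fun ω s _ => ?_
    have : Complex.I * s * (V ω : ℂ) = ((s * V ω : ℝ) : ℂ) * Complex.I := by push_cast; ring
    rw [norm_mul, norm_smul, this, Complex.norm_exp_ofReal_mul_I]
    simp
  · exact hV.integrable.abs
  · refine ae_of_all _ fun ω s _ => ?_
    have h1 : HasDerivAt (fun s : ℝ => Complex.I * s * (V ω : ℂ)) (Complex.I * 1 * (V ω : ℂ)) s :=
      ((Complex.ofRealCLM.hasDerivAt (x := s)).const_mul Complex.I).mul_const _
    convert! h1.cexp using 1
    rw [Complex.real_smul]; ring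

lemma charfun_bd (h : GF P X ρ) (p : ℕ) (N v : ℝ) (hN : 0 < N) (hv : 0 ≤ v) (t : ℝ) :
    ‖Complex.exp ((v * t ^ 2 / 2 : ℝ)) *
      (∫ ω, Complex.exp (Complex.I * ((t / √N : ℝ) : ℂ) * (Vv X (p + 1) ω : ℂ)) ∂P) - 1‖
      ≤ rexp (v * t ^ 2 / 2) * |t| * (∫ ω, |v - Gam X ρ p ω / N| ∂P) * |t| := by
  set V := Vv X (p + 1) with hVd
  have hV : AllLp V P := Vv_allLp h (p + 1)
  have hVm : AEStronglyMeasurable V P := (hV 1).aestronglyMeasurable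
  set D := ∫ ω, |v - Gam X ρ p ω / N| ∂P with hD
  have hDn : 0 ≤ D := integral_nonneg fun _ => abs_nonneg _
  have hG : AllLp (Gam X ρ p) P := Gam_allLp h p
  have hGi : Integrable (fun ω => v - Gam X ρ p ω / N) P :=
    (integrable_const v).sub (hG.integrable.div_const N)
  have eA : ∀ t : ℝ, AllLp (fun ω => Complex.exp (Complex.I * t * (V ω : ℂ))) P := fun t => by
    simpa only [one_mul] using exp_allLp hVm t 1
  set ψ : ℝ → ℂ := fun s => Complex.exp ((v * s ^ 2 / 2 : ℝ)) *
      (∫ ω, Complex.exp (Complex.I * ((s / √N : ℝ) : ℂ) * (V ω : ℂ)) ∂P) with hψ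
  have hsq : √N ≠ 0 := (Real.sqrt_pos.2 hN).ne'
  have hsq2 : √N * √N = N := Real.mul_self_sqrt hN.le
  have hder : ∀ s, HasDerivAt ψ (Complex.exp ((v * s ^ 2 / 2 : ℝ)) * (s *
      ∫ ω, (v - Gam X ρ p ω / N) • Complex.exp (Complex.I * ((s / √N : ℝ) : ℂ) * (V ω : ℂ)) ∂P)) s := by
    intro s
    have h1 : HasDerivAt (fun s : ℝ => Complex.exp ((v * s ^ 2 / 2 : ℝ)))
        (Complex.exp ((v * s ^ 2 / 2 : ℝ)) * ((v * s : ℝ) : ℂ)) s := by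
      have : HasDerivAt (fun s : ℝ => v * s ^ 2 / 2) (v * s) s := by
        have := (((hasDerivAt_id s).pow 2).const_mul v).div_const 2
        convert! this using 1
        simp; ring
      exact this.ofReal_comp.cexp
    have h2 := (phi_deriv hV (s / √N)).scomp s (h := fun s => s / √N) ((hasDerivAt_id s).div_const (√N))
    have h3 := h1.mul h2
    convert! h3 using 1
    rw [integral_const_mul, stein h p (s / √N)]
    have e2 : ∫ ω, Gam X ρ p ω • (Complex.I * ((s / √N : ℝ) : ℂ) *
        Complex.exp (Complex.I * ((s / √N : ℝ) : ℂ) * (Vv X (p + 1) ω : ℂ))) ∂P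
        = Complex.I * ((s / √N : ℝ) : ℂ) * ∫ ω, Gam X ρ p ω •
        Complex.exp (Complex.I * ((s / √N : ℝ) : ℂ) * (Vv X (p + 1) ω : ℂ)) ∂P := by
      rw [← integral_const_mul]
      congr with ω
      simp only [Complex.real_smul]; ring
    rw [e2]
    have e3 : ∫ ω, (v - Gam X ρ p ω / N) • Complex.exp (Complex.I * ((s / √N : ℝ) : ℂ) * (V ω : ℂ)) ∂P
        = (v : ℂ) * (∫ ω, Complex.exp (Complex.I * ((s / √N : ℝ) : ℂ) * (V ω : ℂ)) ∂P) -
          (1 / N : ℝ) * ∫ ω, Gam X ρ p ω • Complex.exp (Complex.I * ((s / √N : ℝ) : ℂ) * (V ω : ℂ)) ∂P := by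
      rw [← integral_const_mul, ← integral_const_mul, ← integral_sub]
      · congr with ω
        simp only [Complex.real_smul]
        push_cast
        ring
      · exact (eA _).integrable.const_mul _
      · exact (hG.smul (eA _)).integrable.const_mul _
    rw [e3, ← hVd]
    simp only [Function.comp_apply]
    generalize (∫ ω, Complex.exp (Complex.I * ((s / √N : ℝ) : ℂ) * (V ω : ℂ)) ∂P) = A
    generalize (∫ ω, Gam X ρ p ω • Complex.exp (Complex.I * ((s / √N : ℝ) : ℂ) * (V ω : ℂ)) ∂P) = B
    have hN2 : ((√N : ℝ) : ℂ) * ((√N : ℝ) : ℂ) = (N : ℂ) := by exact_mod_cast congrArg Complex.ofReal hsq2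
    have hNc : ((√N : ℝ) : ℂ) ≠ 0 := by exact_mod_cast hsq
    simp only [Complex.real_smul]
    push_cast
    rw [← hN2]
    field_simp
    rw [Complex.I_sq]
    ring
  have hbd : ∀ s ∈ Set.Icc (-|t|) |t|, ‖Complex.exp ((v * s ^ 2 / 2 : ℝ)) * (s *
      ∫ ω, (v - Gam X ρ p ω / N) • Complex.exp (Complex.I * ((s / √N : ℝ) : ℂ) * (V ω : ℂ)) ∂P)‖
      ≤ rexp (v * t ^ 2 / 2) * |t| * D := by
    intro s hs
    have hs' : |s| ≤ |t| := abs_le.2 hs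
    rw [norm_mul, norm_mul, ← Complex.ofReal_exp, Complex.norm_real, Complex.norm_real,
      Real.norm_eq_abs, Real.norm_eq_abs, abs_of_pos (Real.exp_pos _), ← mul_assoc]
    have h2 : s ^ 2 ≤ t ^ 2 := sq_le_sq.2 hs'
    gcongr
    refine (norm_integral_le_integral_norm _).trans (le_of_eq ?_)
    rw [hD]
    congr with ω
    have : Complex.I * ((s / √N : ℝ) : ℂ) * (V ω : ℂ) = ((s / √N * V ω : ℝ) : ℂ) * Complex.I := by
      push_cast; ring
    rw [norm_smul, this, Complex.norm_exp_ofReal_mul_I, mul_one, Real.norm_eq_abs]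
  have := (convex_Icc (-|t|) |t|).norm_image_sub_le_of_norm_hasDerivWithin_le
    (f := ψ) (fun s _ => (hder s).hasDerivWithinAt) hbd (x := 0) (y := t)
    (by simp) ⟨neg_abs_le t, le_abs_self t⟩
  have h0 : ψ 0 = 1 := by simp [hψ]
  rw [h0] at this
  simpa only [sub_zero, Real.norm_eq_abs] using this

end stein


section variance

/-- the fourfold sums controlling the variance -/
noncomputable def Q4 {ι : Type*} [Fintype ι] (ρ : ι → ι → ℝ) (e : ℕ × ℕ × ℕ) : ℝ :=
  ∑ i, ∑ j, ∑ k, ∑ l, (|ρ i j| * |ρ k l|) ^ (e.1 + 1) * (|ρ i k| * |ρ j l|) ^ e.2.1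
    * (|ρ i l| * |ρ j k|) ^ e.2.2

lemma Gam_var (p : ℕ) : ∃ C : ℝ, 0 ≤ C ∧
    ∀ {Ω : Type*} [MeasurableSpace Ω] {P : Measure Ω} [IsProbabilityMeasure P]
      {ι : Type*} [Fintype ι] {X : ι → Ω → ℝ} {ρ : ι → ι → ℝ}, GF P X ρ →
      ∫ ω, (Gam X ρ p ω - (p + 1).factorial * ∑ i, ∑ j, ρ i j ^ (p + 1)) ^ 2 ∂P
        ≤ C * ∑ e ∈ expo p, Q4 ρ e := by
  obtain ⟨C, hC, hK⟩ := K_bound p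
  refine ⟨(p + 1) ^ 2 * C, by positivity, ?_⟩
  intro Ω _ P _ ι _ X ρ h
  set hh : ι → ι → Ω → ℝ := fun i j ω => He p (X i ω) * He p (X j ω) - Mom2 P X i j p p with hhd
  have e1 : ∀ ω, Gam X ρ p ω - (p + 1).factorial * ∑ i, ∑ j, ρ i j ^ (p + 1)
      = (p + 1) * ∑ i, ∑ j, ρ i j * hh i j ω := by
    intro ω
    simp only [hhd, mul_sub, Finset.sum_sub_distrib, Gam]
    congr 1
    simp only [Mom2_diag h, Finset.mul_sum]
    refine Finset.sum_congr rfl fun i _ => Finset.sum_congr rfl fun j _ => ?_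
    rw [Nat.factorial_succ]; push_cast; ring
  have e2 : ∀ ω, (Gam X ρ p ω - (p + 1).factorial * ∑ i, ∑ j, ρ i j ^ (p + 1)) ^ 2
      = ∑ i, ∑ j, ∑ k, ∑ l, ((p + 1) ^ 2 * (ρ i j * ρ k l)) * (hh i j ω * hh k l ω) := by
    intro ω
    rw [e1, mul_pow, sq (∑ i, ∑ j, ρ i j * hh i j ω)]
    simp only [Finset.sum_mul, Finset.mul_sum]
    refine Finset.sum_congr rfl fun i _ => Finset.sum_congr rfl fun j _ =>
      Finset.sum_congr rfl fun k _ => Finset.sum_congr rfl fun l _ => ?_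
    ring
  have hA : ∀ i j, AllLp (hh i j) P := by
    intro i j
    have := ((h.allLp_He i p).mul (h.allLp_He j p)).add (AllLp.const (P := P) (-Mom2 P X i j p p))
    simpa only [hhd, sub_eq_add_neg] using this
  have hA2 : ∀ i j k l, AllLp (fun ω => ((p + 1) ^ 2 * (ρ i j * ρ k l)) * (hh i j ω * hh k l ω)) P :=
    fun i j k l => (AllLp.const _).mul ((hA i j).mul (hA k l))
  have e3 : ∀ i j k l, ∫ ω, hh i j ω * hh k l ω ∂P
      = Mom P X i j k l p p p p - Mom2 P X i j p p * Mom2 P X k l p p := by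
    intro i j k l
    have a1 := (h.allLp_He i p).mul (h.allLp_He j p)
    have a2 := (h.allLp_He k p).mul (h.allLp_He l p)
    have : ∀ ω, hh i j ω * hh k l ω =
        He p (X i ω) * (He p (X j ω) * He p (X k ω) * He p (X l ω)) -
        Mom2 P X k l p p * (He p (X i ω) * He p (X j ω)) -
        Mom2 P X i j p p * (He p (X k ω) * He p (X l ω)) +
        Mom2 P X i j p p * Mom2 P X k l p p := by
      intro ω; simp only [hhd]; ring
    simp_rw [this]
    have b0 : Integrable (fun ω => He p (X i ω) * (He p (X j ω) * He p (X k ω) * He p (X l ω))) P :=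
      ((h.allLp_He i p).mul (((h.allLp_He j p).mul (h.allLp_He k p)).mul (h.allLp_He l p))).integrable
    have b1 := a1.integrable.const_mul (Mom2 P X k l p p)
    have b2 := a2.integrable.const_mul (Mom2 P X i j p p)
    have b01 : Integrable (fun ω => He p (X i ω) * (He p (X j ω) * He p (X k ω) * He p (X l ω)) -
        Mom2 P X k l p p * (He p (X i ω) * He p (X j ω))) P := b0.sub b1
    have b012 : Integrable (fun ω => He p (X i ω) * (He p (X j ω) * He p (X k ω) * He p (X l ω)) -
        Mom2 P X k l p p * (He p (X i ω) * He p (X j ω)) -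
        Mom2 P X i j p p * (He p (X k ω) * He p (X l ω))) P := b01.sub b2
    rw [integral_add b012 (integrable_const _), integral_sub b01 b2,
      integral_sub b0 b1, integral_const_mul, integral_const_mul]
    have c1 : ∫ ω, He p (X i ω) * He p (X j ω) ∂P = Mom2 P X i j p p := rfl
    have c2 : ∫ ω, He p (X k ω) * He p (X l ω) ∂P = Mom2 P X k l p p := rfl
    have c3 : ∫ ω, He p (X i ω) * (He p (X j ω) * He p (X k ω) * He p (X l ω)) ∂P
      = Mom P X i j k l p p p p := rfl
    rw [c1, c2, c3]
    simp
    ring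
  simp_rw [e2]
  rw [integral_finsetSum _ fun i _ => (AllLp.sum _ fun j _ => AllLp.sum _ fun k _ =>
    AllLp.sum _ fun l _ => hA2 i j k l).integrable]
  have e4 : ∀ i, ∫ ω, ∑ j, ∑ k, ∑ l, ((p + 1) ^ 2 * (ρ i j * ρ k l)) * (hh i j ω * hh k l ω) ∂P
      = ∑ j, ∑ k, ∑ l, ((p + 1) ^ 2 * (ρ i j * ρ k l)) *
        (Mom P X i j k l p p p p - Mom2 P X i j p p * Mom2 P X k l p p) := by
    intro i
    rw [integral_finsetSum _ fun j _ => (AllLp.sum _ fun k _ =>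
      AllLp.sum _ fun l _ => hA2 i j k l).integrable]
    refine Finset.sum_congr rfl fun j _ => ?_
    rw [integral_finsetSum _ fun k _ => (AllLp.sum _ fun l _ => hA2 i j k l).integrable]
    refine Finset.sum_congr rfl fun k _ => ?_
    rw [integral_finsetSum _ fun l _ => (hA2 i j k l).integrable]
    refine Finset.sum_congr rfl fun l _ => ?_
    rw [integral_const_mul, e3]
  simp_rw [e4]
  have e5 : ((p : ℝ) + 1) ^ 2 * C * ∑ e ∈ expo p, Q4 ρ e = ∑ i, ∑ j, ∑ k, ∑ l,
      ((p : ℝ) + 1) ^ 2 * C * ∑ e ∈ expo p, (|ρ i j| * |ρ k l|) ^ (e.1 + 1) *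
        (|ρ i k| * |ρ j l|) ^ e.2.1 * (|ρ i l| * |ρ j k|) ^ e.2.2 := by
    simp only [Q4, ← Finset.mul_sum]
    congr 1
    rw [Finset.sum_comm]
    refine Finset.sum_congr rfl fun i _ => ?_
    rw [Finset.sum_comm]
    refine Finset.sum_congr rfl fun j _ => ?_
    rw [Finset.sum_comm]
    refine Finset.sum_congr rfl fun k _ => ?_
    rw [Finset.sum_comm]
  rw [e5]
  refine Finset.sum_le_sum fun i _ => Finset.sum_le_sum fun j _ => Finset.sum_le_sum fun k _ =>
    Finset.sum_le_sum fun l _ => ?_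
  have := hK _ _ _ _ _ _ _ _ (Mom_RecK h i j k l)
  refine (le_abs_self _).trans ?_
  rw [abs_mul, abs_mul, abs_mul, abs_of_nonneg (by positivity : (0:ℝ) ≤ ((p : ℝ) + 1) ^ 2)]
  refine (mul_le_mul_of_nonneg_left this (by positivity)).trans (le_of_eq ?_)
  simp only [Finset.mul_sum]
  refine Finset.sum_congr rfl fun e _ => ?_
  ring

lemma D_bound {Ω : Type*} [MeasurableSpace Ω] {P : Measure Ω} [IsProbabilityMeasure P]
    {Γ : Ω → ℝ} (hΓ : AllLp Γ P) (v m N : ℝ) (hN : 0 < N) :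
    ∫ ω, |v - Γ ω / N| ∂P ≤ |v - m / N| + √((∫ ω, (Γ ω - m) ^ 2 ∂P) / N ^ 2) := by
  have h1 : AllLp (fun ω => Γ ω - m) P := by
    simpa only [sub_eq_add_neg] using hΓ.add (AllLp.const (-m))
  have h2 : Integrable (fun ω => |Γ ω - m| / N) P := h1.integrable.abs.div_const N
  have hle : ∀ ω, |v - Γ ω / N| ≤ |v - m / N| + |Γ ω - m| / N := by
    intro ω
    have : v - Γ ω / N = (v - m / N) - (Γ ω - m) / N := by field_simp; ring
    rw [this]
    refine (abs_sub _ _).trans ?_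
    rw [abs_div, abs_of_pos hN]
  have hi : Integrable (fun ω => |v - Γ ω / N|) P :=
    ((integrable_const v).sub (hΓ.integrable.div_const N)).abs
  have h3 : Integrable (fun ω => |v - m / N| + |Γ ω - m| / N) P := (integrable_const _).add h2
  refine (integral_mono hi h3 hle).trans ?_
  rw [integral_add (integrable_const _) h2]
  simp only [integral_const, probReal_univ, one_smul]
  gcongr
  apply Real.le_sqrt_of_sq_le
  rw [integral_div, div_pow]
  gcongr
  set M := ∫ ω, |Γ ω - m| ∂P with hM
  have i1 : Integrable (fun ω => (Γ ω - m) ^ 2) P := (h1.pow 2).integrable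
  have i2 : Integrable (fun ω => 2 * M * |Γ ω - m|) P := h1.integrable.abs.const_mul _
  have i3 : Integrable (fun ω => (Γ ω - m) ^ 2 - 2 * M * |Γ ω - m|) P := i1.sub i2
  have key : 0 ≤ ∫ ω, ((Γ ω - m) ^ 2 - 2 * M * |Γ ω - m| + M ^ 2) ∂P := by
    refine integral_nonneg fun ω => ?_
    have := sq_nonneg (|Γ ω - m| - M)
    have h' := sq_abs (Γ ω - m)
    show 0 ≤ (Γ ω - m) ^ 2 - 2 * M * |Γ ω - m| + M ^ 2
    nlinarith
  rw [integral_add i3 (integrable_const _), integral_sub i1 i2, integral_const_mul, ← hM] at key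
  simp only [integral_const, probReal_univ, one_smul] at key
  nlinarith

end variance

section deterministic

lemma row_le {Y : ℤ → ℝ} (hY : ∀ z, 0 ≤ Y z) (hS : Summable Y) (n : ℕ) (j : ℤ) :
    ∑ i : Fin n, Y ((i : ℤ) - j) ≤ ∑' z, Y z := by
  have hinj : Function.Injective (fun i : Fin n => ((i : ℕ) : ℤ) - j) := by
    intro a b hab
    apply Fin.ext
    simp only at hab
    omega
  calc ∑ i : Fin n, Y ((i : ℤ) - j)
      = ∑ z ∈ Finset.univ.map ⟨fun i : Fin n => ((i : ℕ) : ℤ) - j, hinj⟩, Y z := by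
        rw [Finset.sum_map]; rfl
    _ ≤ _ := hS.sum_le_tsum _ fun z _ => hY z

lemma row_count (F : Finset ℤ) (n : ℕ) (j : ℤ) :
    ∑ i : Fin n, (if ((i : ℤ) - j) ∈ F then (1 : ℝ) else 0) ≤ F.card := by
  have := row_le (Y := fun z => if z ∈ F then (1 : ℝ) else 0) (fun z => by positivity)
    (summable_of_ne_finset_zero (s := F) (by intro z hz; simp [hz])) n j
  refine this.trans (le_of_eq ?_)
  rw [tsum_eq_sum (s := F) (by intro z hz; simp [hz])]
  simp

lemma x_le {q : ℕ} (hq : 1 ≤ q) {η x : ℝ} (hη : 0 < η) (hx : 0 ≤ x) :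
    x ≤ η + (1 / η) ^ (q - 1) * x ^ q := by
  rcases le_total x η with h | h
  · have : 0 ≤ (1 / η) ^ (q - 1) * x ^ q := by positivity
    linarith
  · have h1 : 1 ≤ ((1 / η) * x) ^ (q - 1) := by
      apply one_le_pow₀
      rw [one_div, inv_mul_eq_div, one_le_div hη]; exact h
    have : (1 / η) ^ (q - 1) * x ^ q = ((1 / η) * x) ^ (q - 1) * x := by
      obtain ⟨r, rfl⟩ : ∃ r, q = r + 1 := ⟨q - 1, by omega⟩
      simp only [Nat.add_sub_cancel]
      rw [mul_pow]; ring
    rw [this]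
    nlinarith

lemma prod_le_sum {a b c q : ℕ} (h : a + b + c = q) {u v w : ℝ} (hu : 0 ≤ u) (hv : 0 ≤ v)
    (hw : 0 ≤ w) : u ^ a * v ^ b * w ^ c ≤ u ^ q + v ^ q + w ^ q := by
  set m := max u (max v w) with hm
  have h1 : u ≤ m := le_max_left _ _
  have h2 : v ≤ m := (le_max_left _ _).trans (le_max_right _ _)
  have h3 : w ≤ m := (le_max_right _ _).trans (le_max_right _ _)
  have h0 : 0 ≤ m := hu.trans h1
  have : u ^ a * v ^ b * w ^ c ≤ m ^ q := by
    calc u ^ a * v ^ b * w ^ c ≤ m ^ a * m ^ b * m ^ c := by gcongr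
      _ = m ^ q := by rw [← h]; ring
  have hu' := pow_nonneg hu q
  have hv' := pow_nonneg hv q
  have hw' := pow_nonneg hw q
  have h4 : m = u ∨ m = v ∨ m = w := by
    rcases max_choice u (max v w) with h | h
    · exact Or.inl h
    · rcases max_choice v w with h' | h'
      · right; left; rw [hm, h, h']
      · right; right; rw [hm, h, h']
  rcases h4 with h | h | h <;> rw [h] at this <;> linarith

lemma prod_le_eta {a b c q : ℕ} (h : a + b + c = q) (ha : 1 ≤ a) {u v w η : ℝ} (hu : 0 ≤ u)
    (hv : 0 ≤ v) (hw : 0 ≤ w) (hη : 0 < η) (hη1 : η ≤ 1) :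
    u ^ a * v ^ b * w ^ c ≤ (1 / η) ^ q * u ^ q + η * (v ^ q + w ^ q) := by
  set m := max v w with hm
  have h2 : v ≤ m := le_max_left _ _
  have h3 : w ≤ m := le_max_right _ _
  have h0 : 0 ≤ m := hv.trans h2
  have key : u ^ a * v ^ b * w ^ c ≤ u ^ a * m ^ (b + c) := by
    calc u ^ a * v ^ b * w ^ c ≤ u ^ a * m ^ b * m ^ c := by gcongr
      _ = _ := by ring
  have hm2 : m ^ q ≤ v ^ q + w ^ q := by
    have hv' := pow_nonneg hv q
    have hw' := pow_nonneg hw q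
    rcases max_choice v w with h' | h' <;> rw [hm, h'] <;> linarith
  have hp : 0 ≤ v ^ q + w ^ q := by positivity
  refine key.trans ?_
  rcases le_total (η * m) u with hc | hc
  · have h4 : m ≤ (1 / η) * u := by
      rw [one_div, inv_mul_eq_div, le_div_iff₀ hη]; linarith
    have h5 : 1 ≤ 1 / η := by rw [le_div_iff₀ hη]; linarith
    calc u ^ a * m ^ (b + c) ≤ ((1 / η) * u) ^ a * ((1 / η) * u) ^ (b + c) := by
          gcongr
          nlinarith
      _ = (1 / η) ^ q * u ^ q := by rw [← h]; ring
      _ ≤ _ := by nlinarith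
  · calc u ^ a * m ^ (b + c) ≤ (η * m) ^ a * m ^ (b + c) := by gcongr
      _ = η ^ a * m ^ q := by rw [← h]; ring
      _ ≤ η * (v ^ q + w ^ q) := by
          gcongr
          exact pow_le_of_le_one hη.le hη1 (by omega)
      _ ≤ _ := by
          have : 0 ≤ (1 / η) ^ q * u ^ q := by positivity
          linarith

lemma prod_le_lin {a b c : ℕ} (hbc : 0 < b + c) {u v w : ℝ} (hu : 0 ≤ u)
    (hv : 0 ≤ v) (hw : 0 ≤ w) (hu1 : u ≤ 1) (hv1 : v ≤ 1) (hw1 : w ≤ 1) :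
    u ^ a * v ^ b * w ^ c ≤ v + w := by
  have h1 := pow_le_one₀ (n := a) hu hu1
  have h2 := pow_le_one₀ (n := b) hv hv1
  have h3 := pow_le_one₀ (n := c) hw hw1
  have p1 := pow_nonneg hu a
  have p2 := pow_nonneg hv b
  have p3 := pow_nonneg hw c
  have h12 : u ^ a * v ^ b ≤ v ^ b := mul_le_of_le_one_left p2 h1
  rcases Nat.eq_zero_or_pos b with hb | hb
  · have : w ^ c ≤ w := pow_le_of_le_one hw hw1 (by omega)
    calc u ^ a * v ^ b * w ^ c ≤ 1 * w ^ c := by gcongr; linarith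
      _ ≤ _ := by linarith
  · have : v ^ b ≤ v := pow_le_of_le_one hv hv1 (by omega)
    calc u ^ a * v ^ b * w ^ c ≤ v ^ b * 1 := by gcongr
      _ ≤ _ := by linarith

/-- the triple sum -/
noncomputable def T3 (x : ℤ → ℝ) (a b c n : ℕ) : ℝ :=
  ∑ k : Fin n, ∑ l : Fin n, ∑ j : Fin n,
    x ((k : ℤ) - l) ^ a * x ((j : ℤ) - l) ^ b * x ((j : ℤ) - k) ^ c

lemma T3_bound {x : ℤ → ℝ} (hx0 : ∀ z, 0 ≤ x z) (hx1 : ∀ z, x z ≤ 1) {a b c q : ℕ}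
    (h : a + b + c = q) (ha : 1 ≤ a) (hbc : 0 < b + c) (hS : Summable fun z => x z ^ q)
    (F : Finset ℤ) (ε : ℝ) (hε : ∑' z, (if z ∈ F then 0 else x z ^ q) ≤ ε)
    (η δ : ℝ) (hη : 0 < η) (hη1 : η ≤ 1) (hδ : 0 < δ) (n : ℕ) :
    T3 x a b c n ≤ (n : ℝ) ^ 2 * ((1 / η) ^ q * ε + 2 * η * ∑' z, x z ^ q)
      + 2 * n * F.card * (δ * n + (1 / δ) ^ (q - 1) * ∑' z, x z ^ q) := by
  set S := ∑' z, x z ^ q with hSd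
  have hq : 1 ≤ q := by omega
  have hxq : ∀ z, 0 ≤ x z ^ q := fun z => pow_nonneg (hx0 z) q
  have hS0 : 0 ≤ S := tsum_nonneg hxq
  have hrow : ∀ l : ℤ, ∑ j : Fin n, x ((j : ℤ) - l) ^ q ≤ S := fun l => row_le hxq hS n l
  have hrow1 : ∀ l : ℤ, ∑ j : Fin n, x ((j : ℤ) - l) ≤ δ * n + (1 / δ) ^ (q - 1) * S := by
    intro l
    calc ∑ j : Fin n, x ((j : ℤ) - l)
        ≤ ∑ j : Fin n, (δ + (1 / δ) ^ (q - 1) * x ((j : ℤ) - l) ^ q) :=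
          Finset.sum_le_sum fun j _ => x_le hq hδ (hx0 _)
      _ = δ * n + (1 / δ) ^ (q - 1) * ∑ j : Fin n, x ((j : ℤ) - l) ^ q := by
          rw [Finset.sum_add_distrib, ← Finset.mul_sum]; simp; ring
      _ ≤ _ := by gcongr; exact hrow l
  set D := δ * n + (1 / δ) ^ (q - 1) * S with hD
  have hD0 : 0 ≤ D := by positivity
  have inner : ∀ k l : Fin n, ∑ j : Fin n,
      x ((k : ℤ) - l) ^ a * x ((j : ℤ) - l) ^ b * x ((j : ℤ) - k) ^ c
      ≤ (if ((k : ℤ) - l) ∈ F then 1 else 0) * (2 * D)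
        + (n * (1 / η) ^ q * (if ((k : ℤ) - l) ∈ F then 0 else x ((k : ℤ) - l) ^ q)
          + 2 * η * S) := by
    intro k l
    by_cases hF : ((k : ℤ) - l) ∈ F
    · simp only [hF, if_true]
      calc _ ≤ ∑ j : Fin n, (x ((j : ℤ) - l) + x ((j : ℤ) - k)) :=
            Finset.sum_le_sum fun j _ => prod_le_lin hbc (hx0 _) (hx0 _) (hx0 _) (hx1 _) (hx1 _)
              (hx1 _)
        _ ≤ 2 * D := by
            rw [Finset.sum_add_distrib]; linarith [hrow1 l, hrow1 k]
        _ ≤ _ := by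
            have : 0 ≤ 2 * η * S := by positivity
            linarith
    · simp only [hF, if_false]
      calc _ ≤ ∑ j : Fin n, ((1 / η) ^ q * x ((k : ℤ) - l) ^ q
              + η * (x ((j : ℤ) - l) ^ q + x ((j : ℤ) - k) ^ q)) :=
            Finset.sum_le_sum fun j _ => prod_le_eta h ha (hx0 _) (hx0 _) (hx0 _) hη hη1
        _ = n * (1 / η) ^ q * x ((k : ℤ) - l) ^ q
              + η * (∑ j : Fin n, x ((j : ℤ) - l) ^ q + ∑ j : Fin n, x ((j : ℤ) - k) ^ q) := by
            simp only [Finset.sum_add_distrib, ← Finset.mul_sum]; simp; ring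
        _ ≤ n * (1 / η) ^ q * x ((k : ℤ) - l) ^ q + η * (S + S) := by
            gcongr
            · exact hrow l
            · exact hrow k
        _ = _ := by ring
  have hS' : Summable fun z => if z ∈ F then 0 else x z ^ q :=
    Summable.of_nonneg_of_le (fun z => by split_ifs <;> simp [hxq]) (fun z => by
      split_ifs
      · exact hxq z
      · exact le_rfl) hS
  calc T3 x a b c n ≤ ∑ k : Fin n, ∑ l : Fin n, ((if ((k : ℤ) - l) ∈ F then 1 else 0) * (2 * D)
        + (n * (1 / η) ^ q * (if ((k : ℤ) - l) ∈ F then 0 else x ((k : ℤ) - l) ^ q)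
          + 2 * η * S)) := Finset.sum_le_sum fun k _ => Finset.sum_le_sum fun l _ => inner k l
    _ = ∑ l : Fin n, ((∑ k : Fin n, (if ((k : ℤ) - l) ∈ F then (1 : ℝ) else 0)) * (2 * D)
        + (n * (1 / η) ^ q * (∑ k : Fin n, (if ((k : ℤ) - l) ∈ F then 0 else x ((k : ℤ) - l) ^ q))
          + n * (2 * η * S))) := by
        rw [Finset.sum_comm]
        refine Finset.sum_congr rfl fun l _ => ?_
        rw [Finset.sum_add_distrib, Finset.sum_add_distrib, ← Finset.sum_mul, ← Finset.mul_sum]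
        simp
    _ ≤ ∑ l : Fin n, (F.card * (2 * D) + (n * (1 / η) ^ q * ε + n * (2 * η * S))) := by
        refine Finset.sum_le_sum fun l _ => ?_
        gcongr
        · exact row_count F n l
        · exact (row_le (Y := fun z => if z ∈ F then 0 else x z ^ q)
            (fun z => by split_ifs <;> simp [hxq]) hS' n l).trans hε
    _ = _ := by simp; ring

lemma tail_small {y : ℤ → ℝ} (hy : ∀ z, 0 ≤ y z) (hS : Summable y) {ε : ℝ} (hε : 0 < ε) :
    ∃ F : Finset ℤ, ∑' z, (if z ∈ F then 0 else y z) ≤ ε := by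
  obtain ⟨F, hF⟩ := summable_iff_vanishing_norm.1 hS ε hε
  refine ⟨F, Real.tsum_le_of_sum_le (fun z => by split_ifs <;> simp [hy]) fun G => ?_⟩
  have h1 : ∑ z ∈ G, (if z ∈ F then 0 else y z) = ∑ z ∈ G \ F, y z := by
    rw [← Finset.filter_notMem_eq_sdiff, Finset.sum_filter]
    refine Finset.sum_congr rfl fun z _ => ?_
    by_cases h : z ∈ F <;> simp [h]
  rw [h1]
  exact (le_abs_self _).trans (hF (G \ F) Finset.sdiff_disjoint).le

lemma T3_lim {x : ℤ → ℝ} (hx0 : ∀ z, 0 ≤ x z) (hx1 : ∀ z, x z ≤ 1) {a b c q : ℕ}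
    (h : a + b + c = q) (ha : 1 ≤ a) (hbc : 0 < b + c) (hS : Summable fun z => x z ^ q) :
    Tendsto (fun n : ℕ => T3 x a b c n / (n : ℝ) ^ 2) atTop (𝓝 0) := by
  have hxq : ∀ z, 0 ≤ x z ^ q := fun z => pow_nonneg (hx0 z) q
  have hS0 : 0 ≤ ∑' z, x z ^ q := tsum_nonneg hxq
  set S := ∑' z, x z ^ q with hSd
  have hT0 : ∀ n, 0 ≤ T3 x a b c n := fun n => Finset.sum_nonneg fun k _ =>
    Finset.sum_nonneg fun l _ => Finset.sum_nonneg fun j _ =>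
      mul_nonneg (mul_nonneg (pow_nonneg (hx0 _) _) (pow_nonneg (hx0 _) _)) (pow_nonneg (hx0 _) _)
  rw [Metric.tendsto_atTop]
  intro ε hε
  -- choice of the parameters
  set η := min 1 (ε / (10 * (S + 1))) with hηd
  have hη : 0 < η := by positivity
  have hη1 : η ≤ 1 := min_le_left _ _
  have e1 : 2 * η * S ≤ ε / 5 := by
    have : η ≤ ε / (10 * (S + 1)) := min_le_right _ _
    rw [le_div_iff₀ (by positivity)] at this
    nlinarith
  obtain ⟨F, hF⟩ := tail_small hxq hS (ε := ε / 5 * η ^ q) (by positivity)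
  have e2 : (1 / η) ^ q * (ε / 5 * η ^ q) = ε / 5 := by
    rw [one_div, inv_pow]; field_simp
  set δ := ε / (10 * (F.card + 1)) with hδd
  have hδ : 0 < δ := by positivity
  have e3 : 2 * F.card * δ ≤ ε / 5 := by
    rw [hδd, mul_div_assoc', div_le_div_iff₀ (by positivity) (by positivity)]
    nlinarith
  set K := 2 * F.card * ((1 / δ) ^ (q - 1) * S) with hK
  obtain ⟨n0, hn0⟩ := exists_nat_gt (K / (ε / 5))
  refine ⟨n0 + 1, fun n hn => ?_⟩
  have hn1 : (1 : ℝ) ≤ n := by exact_mod_cast (by omega : 1 ≤ n)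
  have hn2 : K ≤ ε / 5 * n := by
    have : (n0 : ℝ) ≤ n := by exact_mod_cast (by omega : n0 ≤ n)
    rw [div_lt_iff₀ (by positivity)] at hn0
    nlinarith
  have := T3_bound hx0 hx1 h ha hbc hS F _ hF η δ hη hη1 hδ n
  rw [e2] at this
  rw [Real.dist_eq, sub_zero, abs_of_nonneg (div_nonneg (hT0 n) (by positivity)),
    div_lt_iff₀ (by positivity)]
  have e4 : 2 * n * F.card * (δ * n + (1 / δ) ^ (q - 1) * S) = 2 * F.card * δ * n ^ 2 + n * K := by
    rw [hK]; ring
  have e5 : 2 * F.card * δ * n ^ 2 ≤ ε / 5 * (n : ℝ) ^ 2 := by gcongr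
  have e6 : n * K ≤ ε / 5 * (n : ℝ) ^ 2 := by nlinarith
  have e7 : (n : ℝ) ^ 2 * (ε / 5 + 2 * η * S) ≤ (n : ℝ) ^ 2 * (ε / 5 + ε / 5) := by gcongr
  have e8 : 0 < ε * (n : ℝ) ^ 2 := by positivity
  rw [← hSd, e4] at this
  nlinarith

lemma sum4_comm {ι : Type*} [Fintype ι] (f : ι → ι → ι → ι → ℝ) :
    ∑ i, ∑ j, ∑ k, ∑ l, f i j k l = ∑ k, ∑ l, ∑ j, ∑ i, f i j k l := by
  rw [Finset.sum_comm]
  have h1 : ∀ j, ∑ i, ∑ k, ∑ l, f i j k l = ∑ k, ∑ l, ∑ i, f i j k l := by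
    intro j
    rw [Finset.sum_comm]
    exact Finset.sum_congr rfl fun k _ => Finset.sum_comm
  simp_rw [h1]
  rw [Finset.sum_comm]
  exact Finset.sum_congr rfl fun k _ => Finset.sum_comm

lemma Q4_lim {R : ℤ → ℝ} (hR : ∀ z, |R z| ≤ 1) {p : ℕ} (hS : Summable fun z => |R z| ^ (p + 1))
    {e : ℕ × ℕ × ℕ} (he : e ∈ expo p) :
    Tendsto (fun n : ℕ => Q4 (fun i j : Fin n => R ((i : ℤ) - j)) e / (n : ℝ) ^ 2)
      atTop (𝓝 0) := by
  obtain ⟨a, b, c⟩ := e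
  have he' : a + b + c = p ∧ 0 < b + c := by
    simp only [expo, Finset.mem_filter] at he
    exact he.2
  set x : ℤ → ℝ := fun z => |R z| with hx
  have hx0 : ∀ z, 0 ≤ x z := fun z => abs_nonneg _
  set S := ∑' z, x z ^ (p + 1) with hSd
  have hxq : ∀ z, 0 ≤ x z ^ (p + 1) := fun z => pow_nonneg (hx0 z) _
  have hT := T3_lim (q := p + 1) hx0 hR (a := a + 1) (b := b) (c := c) (by omega) (by omega)
    he'.2 hS
  have hT' := hT.const_mul (3 * S)
  rw [mul_zero] at hT'
  refine squeeze_zero (fun n => ?_) (fun n => ?_) hT'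
  · refine div_nonneg ?_ (by positivity)
    unfold Q4
    positivity
  · rw [mul_div_assoc']
    gcongr
    show ∑ i : Fin n, ∑ j : Fin n, ∑ k : Fin n, ∑ l : Fin n,
      (x ((i : ℤ) - j) * x ((k : ℤ) - l)) ^ (a + 1) * (x ((i : ℤ) - k) * x ((j : ℤ) - l)) ^ b
      * (x ((i : ℤ) - l) * x ((j : ℤ) - k)) ^ c ≤ _
    have hb : ∀ j k l : Fin n, ∑ i : Fin n,
        (x ((i : ℤ) - j) * x ((k : ℤ) - l)) ^ (a + 1) * (x ((i : ℤ) - k) * x ((j : ℤ) - l)) ^ b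
          * (x ((i : ℤ) - l) * x ((j : ℤ) - k)) ^ c
        ≤ 3 * S * (x ((k : ℤ) - l) ^ (a + 1) * x ((j : ℤ) - l) ^ b * x ((j : ℤ) - k) ^ c) := by
      intro j k l
      have hp : 0 ≤ x ((k : ℤ) - l) ^ (a + 1) * x ((j : ℤ) - l) ^ b * x ((j : ℤ) - k) ^ c := by
        positivity
      calc _ = (∑ i : Fin n, x ((i : ℤ) - j) ^ (a + 1) * x ((i : ℤ) - k) ^ b * x ((i : ℤ) - l) ^ c)
            * (x ((k : ℤ) - l) ^ (a + 1) * x ((j : ℤ) - l) ^ b * x ((j : ℤ) - k) ^ c) := by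
            rw [Finset.sum_mul]
            refine Finset.sum_congr rfl fun i _ => ?_
            simp only [mul_pow]; ring
        _ ≤ _ := by
            refine mul_le_mul_of_nonneg_right ?_ hp
            calc _ ≤ ∑ i : Fin n, (x ((i : ℤ) - j) ^ (p + 1) + x ((i : ℤ) - k) ^ (p + 1)
                  + x ((i : ℤ) - l) ^ (p + 1)) :=
                  Finset.sum_le_sum fun i _ => prod_le_sum (by omega) (hx0 _) (hx0 _) (hx0 _)
              _ ≤ 3 * S := by
                  rw [Finset.sum_add_distrib, Finset.sum_add_distrib]
                  have := row_le hxq hS n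
                  linarith [this j, this k, this l]
    calc _ = ∑ k : Fin n, ∑ l : Fin n, ∑ j : Fin n, ∑ i : Fin n,
          (x ((i : ℤ) - j) * x ((k : ℤ) - l)) ^ (a + 1) * (x ((i : ℤ) - k) * x ((j : ℤ) - l)) ^ b
          * (x ((i : ℤ) - l) * x ((j : ℤ) - k)) ^ c := by
          exact sum4_comm _
      _ ≤ ∑ k : Fin n, ∑ l : Fin n, ∑ j : Fin n,
          3 * S * (x ((k : ℤ) - l) ^ (a + 1) * x ((j : ℤ) - l) ^ b * x ((j : ℤ) - k) ^ c) :=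
          Finset.sum_le_sum fun k _ => Finset.sum_le_sum fun l _ => Finset.sum_le_sum fun j _ =>
            hb j k l
      _ = _ := by simp only [T3, Finset.mul_sum]

lemma sum_lim {Y : ℤ → ℝ} (hS : Summable Y) :
    Tendsto (fun n : ℕ => (∑ i : Fin n, ∑ j : Fin n, Y ((i : ℤ) - j)) / n) atTop
      (𝓝 (∑' z, Y z)) := by
  have hpos : Summable fun m : ℕ => Y ((m : ℤ) + 1) :=
    hS.comp_injective (i := fun m : ℕ => (m : ℤ) + 1) fun a b h => by simpa using h
  have hneg : Summable fun m : ℕ => Y (-((m : ℤ) + 1)) :=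
    hS.comp_injective (i := fun m : ℕ => -((m : ℤ) + 1)) fun a b h => by
      simp only at h; omega
  have ht : ∑' z, Y z = ∑' m : ℕ, Y ((m : ℤ) + 1) + Y 0 + ∑' m : ℕ, Y (-((m : ℤ) + 1)) :=
    tsum_of_add_one_of_neg_add_one hpos hneg
  have hu : Tendsto (fun m : ℕ => ∑ j ∈ Finset.range m, Y ((j : ℤ) + 1) + Y 0
      + ∑ j ∈ Finset.range m, Y (-((j : ℤ) + 1))) atTop (𝓝 (∑' z, Y z)) := by
    rw [ht]
    exact (hpos.hasSum.tendsto_sum_nat.add tendsto_const_nhds).add hneg.hasSum.tendsto_sum_nat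
  have hc := hu.cesaro
  refine hc.congr fun n => ?_
  rw [inv_mul_eq_div]
  congr 1
  have hfin : ∑ i : Fin n, ∑ j : Fin n, Y ((i : ℤ) - j)
      = ∑ i ∈ Finset.range n, ∑ j ∈ Finset.range n, Y ((i : ℤ) - j) := by
    rw [Finset.sum_range]
    refine Finset.sum_congr rfl fun i _ => ?_
    rw [Finset.sum_range]
  rw [hfin]
  clear hfin
  induction n with
  | zero => simp
  | succ n ih =>
    rw [Finset.sum_range_succ, ih]
    simp only [Finset.sum_range_succ _ n, Finset.sum_add_distrib, sub_self]
    have h1 : ∑ j ∈ Finset.range n, Y ((j : ℤ) + 1) = ∑ j ∈ Finset.range n, Y ((n : ℤ) - j) := by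
      rw [← Finset.sum_range_reflect]
      refine Finset.sum_congr rfl fun j hj => ?_
      rw [Finset.mem_range] at hj
      congr 1; omega
    have h2 : ∑ j ∈ Finset.range n, Y (-((j : ℤ) + 1))
        = ∑ j ∈ Finset.range n, Y ((j : ℤ) - n) := by
      rw [← Finset.sum_range_reflect]
      refine Finset.sum_congr rfl fun j hj => ?_
      rw [Finset.mem_range] at hj
      congr 1; omega
    rw [h1, h2]; ring

end deterministic

section correlation

/-- the correlation function of fractional Gaussian noise -/
noncomputable def Rf (H : ℝ) (z : ℤ) : ℝ :=
  (|(z : ℝ) + 1| ^ (2 * H) + |(z : ℝ) - 1| ^ (2 * H) - 2 * |(z : ℝ)| ^ (2 * H)) / 2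

lemma Rf_zero {H : ℝ} (hH : 0 < H) : Rf H 0 = 1 := by
  have : (0 : ℝ) ^ (2 * H) = 0 := Real.zero_rpow (by positivity)
  simp [Rf, this]

lemma Rf_neg (H : ℝ) (z : ℤ) : Rf H (-z) = Rf H z := by
  unfold Rf
  push_cast
  have h1 : |-(z : ℝ) + 1| = |(z : ℝ) - 1| := by rw [← abs_neg]; congr 1; ring
  have h2 : |-(z : ℝ) - 1| = |(z : ℝ) + 1| := by rw [← abs_neg]; congr 1; ring
  rw [h1, h2, abs_neg]; ring

lemma Rf_nat (H : ℝ) (m : ℕ) : Rf H ((m : ℤ) + 1)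
    = (((m : ℝ) + 2) ^ (2 * H) + (m : ℝ) ^ (2 * H) - 2 * ((m : ℝ) + 1) ^ (2 * H)) / 2 := by
  unfold Rf
  push_cast
  have h1 : (m : ℝ) + 1 + 1 = m + 2 := by ring
  have h2 : (m : ℝ) + 1 - 1 = m := by ring
  rw [h1, h2, abs_of_nonneg (by positivity), abs_of_nonneg (by positivity),
    abs_of_nonneg (by positivity)]

lemma Rf_mvt {H : ℝ} (hH : 0 < H) (m : ℕ) : ∃ ζ : ℝ, (m : ℝ) < ζ ∧ ζ < m + 2 ∧
    Rf H ((m : ℤ) + 1) = H * (2 * H - 1) * ζ ^ (2 * H - 2) := by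
  have hm : (0 : ℝ) ≤ m := Nat.cast_nonneg m
  have hc : Continuous fun x : ℝ => (x + 1) ^ (2 * H) - x ^ (2 * H) :=
    ((continuous_id.add continuous_const).rpow_const fun _ => Or.inr (by positivity)).sub
      (continuous_id.rpow_const fun _ => Or.inr (by positivity))
  obtain ⟨ξ, hξ, e1⟩ := exists_hasDerivAt_eq_slope
    (fun x : ℝ => (x + 1) ^ (2 * H) - x ^ (2 * H))
    (fun x : ℝ => 2 * H * (x + 1) ^ (2 * H - 1) - 2 * H * x ^ (2 * H - 1))
    (a := m) (b := m + 1) (by linarith) hc.continuousOn (by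
      intro x hx
      have hx0 : 0 < x := lt_of_le_of_lt hm hx.1
      have d1 : HasDerivAt (fun x : ℝ => (x + 1) ^ (2 * H)) (2 * H * (x + 1) ^ (2 * H - 1)) x := by
        have := ((hasDerivAt_id x).add_const 1).rpow_const (p := 2 * H)
          (Or.inl (by simp; linarith))
        simpa using this
      have d2 : HasDerivAt (fun x : ℝ => x ^ (2 * H)) (2 * H * x ^ (2 * H - 1)) x :=
        Real.hasDerivAt_rpow_const (Or.inl hx0.ne')
      exact d1.sub d2)
  have hξ0 : 0 < ξ := lt_of_le_of_lt hm hξ.1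
  obtain ⟨ζ, hζ, e2⟩ := exists_hasDerivAt_eq_slope
    (fun x : ℝ => 2 * H * x ^ (2 * H - 1))
    (fun x : ℝ => 2 * H * ((2 * H - 1) * x ^ (2 * H - 1 - 1)))
    (a := ξ) (b := ξ + 1) (by linarith) (by
      intro x hx
      have hx0 : 0 < x := lt_of_lt_of_le hξ0 hx.1
      exact (continuousAt_const.mul (Real.continuousAt_rpow_const _ _
        (Or.inl hx0.ne'))).continuousWithinAt) (by
      intro x hx
      have hx0 : 0 < x := hξ0.trans hx.1
      exact (Real.hasDerivAt_rpow_const (Or.inl hx0.ne')).const_mul _)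
  refine ⟨ζ, hξ.1.trans hζ.1, by linarith [hξ.2, hζ.2], ?_⟩
  have h1 : (m : ℝ) + 1 + 1 = m + 2 := by ring
  rw [Rf_nat]
  have h2 : 2 * H - 1 - 1 = 2 * H - 2 := by ring
  rw [h2] at e2
  simp only [add_sub_cancel_left, div_one, h1] at e1 e2
  linarith

lemma Rf_abs_le {H : ℝ} (hH : 0 < H) (hH1 : H < 1) (m : ℕ) (hm : 1 ≤ m) :
    |Rf H ((m : ℤ) + 1)| ≤ (m : ℝ) ^ (2 * H - 2) := by
  obtain ⟨ζ, h1, h2, e⟩ := Rf_mvt hH m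
  have hm' : (0 : ℝ) < m := by exact_mod_cast hm
  have hζ : 0 < ζ := hm'.trans h1
  rw [e, abs_mul, abs_of_nonneg (Real.rpow_nonneg hζ.le (2 * H - 2))]
  have h3 : ζ ^ (2 * H - 2) ≤ (m : ℝ) ^ (2 * H - 2) :=
    Real.rpow_le_rpow_of_nonpos hm' h1.le (by linarith)
  have h4 : |H * (2 * H - 1)| ≤ 1 := by
    rw [abs_le]; constructor <;> nlinarith
  calc _ ≤ 1 * (m : ℝ) ^ (2 * H - 2) := by gcongr
    _ = _ := one_mul _

lemma Rf_summable_nat {H : ℝ} (hH : 0 < H) (hH1 : H < 1) (q : ℕ) (hq : 1 < q * (2 - 2 * H)) :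
    Summable fun m : ℕ => |Rf H ((m : ℤ) + 1)| ^ q := by
  rw [← summable_nat_add_iff 1]
  have hs : Summable fun m : ℕ => (m : ℝ) ^ ((2 * H - 2) * q) := by
    rw [Real.summable_nat_rpow]; linarith
  refine Summable.of_nonneg_of_le (fun m => by positivity) (fun m => ?_)
    ((summable_nat_add_iff 1).2 hs)
  have := Rf_abs_le hH hH1 (m + 1) (by omega)
  rw [Real.rpow_mul (by positivity), Real.rpow_natCast]
  gcongr

lemma Rf_summable {H : ℝ} (hH : 0 < H) (hH1 : H < 1) (q : ℕ) (hq : 1 < q * (2 - 2 * H)) :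
    Summable fun z : ℤ => |Rf H z| ^ q := by
  have h := Rf_summable_nat hH hH1 q hq
  have h0 : Summable fun m : ℕ => |Rf H (m : ℤ)| ^ q := by
    rw [← summable_nat_add_iff 1]
    simpa using h
  refine Summable.of_nat_of_neg h0 ?_
  simpa only [Rf_neg] using h0

lemma Rf_tele (H : ℝ) (hH : 0 < H) (N : ℕ) : ∑ j ∈ Finset.range N, Rf H ((j : ℤ) + 1)
    = (((N : ℝ) + 1) ^ (2 * H) - (N : ℝ) ^ (2 * H) - 1) / 2 := by
  induction N with
  | zero =>
    have : (0 : ℝ) ^ (2 * H) = 0 := Real.zero_rpow (by positivity)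
    simp [this]
  | succ N ih =>
    rw [Finset.sum_range_succ, ih, Rf_nat]
    push_cast
    have h1 : (N : ℝ) + 1 + 1 = N + 2 := by ring
    rw [h1]; ring

lemma Rf_sum_pos {H : ℝ} (hH : 0 < H) (hH1 : H < 1) (q : ℕ) (hq2 : 2 ≤ q)
    (hq : 1 < q * (2 - 2 * H)) : 0 < ∑' z : ℤ, Rf H z ^ q := by
  have ha := Rf_summable_nat hH hH1 q hq
  have hs : Summable fun m : ℕ => Rf H ((m : ℤ) + 1) ^ q := by
    refine Summable.of_norm ?_
    simpa only [norm_pow, Real.norm_eq_abs] using ha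
  have hs' : Summable fun m : ℕ => Rf H (-((m : ℤ) + 1)) ^ q := by
    simpa only [Rf_neg] using hs
  rw [tsum_of_add_one_of_neg_add_one (f := fun z : ℤ => Rf H z ^ q) hs hs', Rf_zero hH]
  simp only [Rf_neg]
  rw [one_pow]
  rcases le_total (1 / 2) H with h | h
  · have : 0 ≤ ∑' m : ℕ, Rf H ((m : ℤ) + 1) ^ q := by
      refine tsum_nonneg fun m => pow_nonneg ?_ q
      obtain ⟨ζ, h1, h2, e⟩ := Rf_mvt hH m
      have hζ : 0 < ζ := lt_of_le_of_lt (Nat.cast_nonneg m) h1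
      rw [e]
      have : 0 ≤ 2 * H - 1 := by linarith
      positivity
    linarith
  · have hneg : ∀ m : ℕ, Rf H ((m : ℤ) + 1) ≤ 0 := by
      intro m
      obtain ⟨ζ, h1, h2, e⟩ := Rf_mvt hH m
      have hζ : 0 < ζ := lt_of_le_of_lt (Nat.cast_nonneg m) h1
      rw [e]
      have h3 := Real.rpow_nonneg hζ.le (2 * H - 2)
      exact mul_nonpos_of_nonpos_of_nonneg (by nlinarith) h3
    have hsum : ∀ N : ℕ, ∑ j ∈ Finset.range N, |Rf H ((j : ℤ) + 1)| ≤ 1 / 2 := by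
      intro N
      have h1 : ∑ j ∈ Finset.range N, |Rf H ((j : ℤ) + 1)|
          = - ∑ j ∈ Finset.range N, Rf H ((j : ℤ) + 1) := by
        rw [← Finset.sum_neg_distrib]
        exact Finset.sum_congr rfl fun j _ => abs_of_nonpos (hneg j)
      rw [h1, Rf_tele H hH]
      have : (N : ℝ) ^ (2 * H) ≤ ((N : ℝ) + 1) ^ (2 * H) :=
        Real.rpow_le_rpow (by positivity) (by linarith) (by positivity)
      linarith
    have hone : ∀ j : ℕ, |Rf H ((j : ℤ) + 1)| ≤ 1 / 2 := fun j =>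
      (Finset.single_le_sum (f := fun j : ℕ => |Rf H ((j : ℤ) + 1)|) (fun i _ => abs_nonneg _)
        (Finset.self_mem_range_succ j)).trans (hsum (j + 1))
    have hq4 : ∑' m : ℕ, |Rf H ((m : ℤ) + 1)| ^ q ≤ 1 / 4 := by
      refine Real.tsum_le_of_sum_range_le (fun m => by positivity) fun N => ?_
      calc ∑ m ∈ Finset.range N, |Rf H ((m : ℤ) + 1)| ^ q
          ≤ ∑ m ∈ Finset.range N, 1 / 2 * |Rf H ((m : ℤ) + 1)| := by
            refine Finset.sum_le_sum fun m _ => ?_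
            have h0 := abs_nonneg (Rf H ((m : ℤ) + 1))
            have h1 := hone m
            calc |Rf H ((m : ℤ) + 1)| ^ q ≤ |Rf H ((m : ℤ) + 1)| ^ 2 :=
                  pow_le_pow_of_le_one h0 (by linarith) hq2
              _ ≤ _ := by nlinarith
        _ = 1 / 2 * ∑ m ∈ Finset.range N, |Rf H ((m : ℤ) + 1)| := by rw [Finset.mul_sum]
        _ ≤ _ := by linarith [hsum N]
    have hlow : -∑' m : ℕ, |Rf H ((m : ℤ) + 1)| ^ q ≤ ∑' m : ℕ, Rf H ((m : ℤ) + 1) ^ q := by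
      rw [← tsum_neg]
      refine Summable.tsum_le_tsum (fun m => ?_) ha.neg hs
      rw [← abs_pow]
      exact neg_abs_le _
    linarith

end correlation

section fbm

variable {Ω : Type*} [MeasureSpace Ω] [IsProbabilityMeasure (ℙ : Measure Ω)]

lemma fbm_law {B : ℝ → Ω → ℝ} {H : ℝ} (hB : IsFractionalBrownianMotion B H) (t : ℝ) (ht : 0 ≤ t) :
    ∃ v : NNReal, Measure.map (B t) (ℙ : Measure Ω) = gaussianReal 0 v := by
  obtain ⟨v, hv⟩ := hB.gaussian_fdd 1 (fun _ => t) (fun _ => ht) (fun _ => 1)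
  exact ⟨v, by simpa using hv⟩

lemma fbm_memLp {B : ℝ → Ω → ℝ} {H : ℝ} (hB : IsFractionalBrownianMotion B H) (t : ℝ)
    (ht : 0 ≤ t) : MemLp (B t) 2 (ℙ : Measure Ω) := by
  obtain ⟨v, hv⟩ := fbm_law hB t ht
  have h := memLp_id_gaussianReal (μ := 0) (v := v) 2
  rw [← hv] at h
  exact (memLp_map_measure_iff h.1 (hB.measurable t).aemeasurable).1 h

lemma fbm_mean {B : ℝ → Ω → ℝ} {H : ℝ} (hB : IsFractionalBrownianMotion B H) (t : ℝ)
    (ht : 0 ≤ t) : ∫ ω, B t ω ∂(ℙ : Measure Ω) = 0 := by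
  obtain ⟨v, hv⟩ := fbm_law hB t ht
  have h : ∫ x, x ∂(Measure.map (B t) (ℙ : Measure Ω)) = 0 := by
    rw [hv]; exact integral_id_gaussianReal
  rwa [integral_map (hB.measurable t).aemeasurable (by fun_prop)] at h

lemma fbm_cov_inc {B : ℝ → Ω → ℝ} {H : ℝ} (hB : IsFractionalBrownianMotion B H)
    (s t u w : ℝ) (hs : 0 ≤ s) (ht : 0 ≤ t) (hu : 0 ≤ u) (hw : 0 ≤ w) :
    ∫ ω, (B t ω - B s ω) * (B w ω - B u ω) ∂(ℙ : Measure Ω)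
      = (|w - s| ^ (2 * H) + |u - t| ^ (2 * H) - |w - t| ^ (2 * H) - |u - s| ^ (2 * H)) / 2 := by
  have hi : ∀ a b : ℝ, 0 ≤ a → 0 ≤ b → Integrable (fun ω => B a ω * B b ω) (ℙ : Measure Ω) :=
    fun a b ha hb => (fbm_memLp hB a ha).integrable_mul (fbm_memLp hB b hb)
  have e : ∀ ω, (B t ω - B s ω) * (B w ω - B u ω)
      = (B t ω * B w ω + B s ω * B u ω) - (B t ω * B u ω + B s ω * B w ω) := fun ω => by ring
  simp_rw [e]
  have i1 : Integrable (fun ω => B t ω * B w ω + B s ω * B u ω) (ℙ : Measure Ω) :=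
    (hi t w ht hw).add (hi s u hs hu)
  have i2 : Integrable (fun ω => B t ω * B u ω + B s ω * B w ω) (ℙ : Measure Ω) :=
    (hi t u ht hu).add (hi s w hs hw)
  rw [integral_sub i1 i2, integral_add (hi t w ht hw) (hi s u hs hu),
    integral_add (hi t u ht hu) (hi s w hs hw), hB.covariance _ _ ht hw, hB.covariance _ _ hs hu,
    hB.covariance _ _ ht hu, hB.covariance _ _ hs hw]
  ring

/-- the normalised increments -/
noncomputable def Xn (B : ℝ → Ω → ℝ) (H : ℝ) (n : ℕ) (k : Fin n) (ω : Ω) : ℝ :=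
  (n : ℝ) ^ H * (B (((k : ℕ) + 1 : ℝ) / n) ω - B (((k : ℕ) : ℝ) / n) ω)

lemma fbm_GF {B : ℝ → Ω → ℝ} {H : ℝ} (hH : 0 < H) (hB : IsFractionalBrownianMotion B H)
    (n : ℕ) (hn : 0 < n) :
    GF (ℙ : Measure Ω) (Xn B H n) (fun i j : Fin n => Rf H ((i : ℤ) - j)) := by
  have hn' : (0 : ℝ) < n := by exact_mod_cast hn
  have hm : Measurable (fun ω (i : Fin n) => Xn B H n i ω) := by
    refine measurable_pi_lambda _ fun i => ?_
    exact ((hB.measurable _).sub (hB.measurable _)).const_mul _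
  refine ⟨⟨?_⟩, ?_, ?_, ?_⟩
  · refine isGaussian_of_map_eq_gaussianReal fun L => ?_
    rw [Measure.map_map L.continuous.measurable hm]
    set c : Fin n → ℝ := fun k => L (Pi.single k 1) * (n : ℝ) ^ H with hc
    obtain ⟨v, hv⟩ := hB.gaussian_fdd (n + n)
      (Fin.append (fun k : Fin n => ((k : ℕ) + 1 : ℝ) / n) (fun k : Fin n => ((k : ℕ) : ℝ) / n))
      (by
        intro i
        refine Fin.addCases (fun i => ?_) (fun i => ?_) i
        · rw [Fin.append_left]; positivity
        · rw [Fin.append_right]; positivity)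
      (Fin.append c (fun k => - c k))
    refine ⟨0, v, ?_⟩
    rw [← hv]
    congr 1
    funext ω
    rw [Fin.sum_univ_add]
    simp only [Fin.append_left, Fin.append_right, Function.comp]
    have hx : (fun i : Fin n => Xn B H n i ω)
        = ∑ i : Fin n, Xn B H n i ω • (Pi.single i (1 : ℝ) : Fin n → ℝ) := by
      funext j
      simp [Finset.sum_apply, Pi.single_apply]
    rw [hx, map_sum, ← Finset.sum_add_distrib]
    refine Finset.sum_congr rfl fun i _ => ?_
    rw [map_smul, smul_eq_mul, hc, Xn]
    ring
  · intro i
    simp only [Xn]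
    rw [integral_const_mul, integral_sub ((fbm_memLp hB _ (by positivity)).integrable (by norm_num))
      ((fbm_memLp hB _ (by positivity)).integrable (by norm_num)),
      fbm_mean hB _ (by positivity), fbm_mean hB _ (by positivity)]
    simp
  · intro i j
    have e : ∀ ω, Xn B H n i ω * Xn B H n j ω = (n : ℝ) ^ (2 * H) *
        ((B (((i : ℕ) + 1 : ℝ) / n) ω - B (((i : ℕ) : ℝ) / n) ω) *
          (B (((j : ℕ) + 1 : ℝ) / n) ω - B (((j : ℕ) : ℝ) / n) ω)) := by
      intro ω
      rw [show 2 * H = H + H by ring, Real.rpow_add hn']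
      simp only [Xn]; ring
    simp_rw [e]
    rw [integral_const_mul, fbm_cov_inc hB _ _ _ _ (by positivity) (by positivity) (by positivity)
      (by positivity)]
    have key : ∀ a b : ℝ, (n : ℝ) ^ (2 * H) * |a / n - b / n| ^ (2 * H) = |b - a| ^ (2 * H) := by
      intro a b
      rw [← sub_div, abs_div, abs_of_pos hn', Real.div_rpow (abs_nonneg _) hn'.le, abs_sub_comm]
      have : (n : ℝ) ^ (2 * H) ≠ 0 := (Real.rpow_pos_of_pos hn' _).ne'
      field_simp
    rw [mul_div_assoc', mul_sub, mul_sub, mul_add, key, key, key, key]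
    unfold Rf
    push_cast
    have a1 : ((i : ℕ) : ℝ) - ((j : ℕ) + 1) = (i : ℕ) - (j : ℕ) - 1 := by ring
    have a2 : ((i : ℕ) : ℝ) + 1 - (j : ℕ) = (i : ℕ) - (j : ℕ) + 1 := by ring
    have a3 : ((i : ℕ) : ℝ) + 1 - ((j : ℕ) + 1) = (i : ℕ) - (j : ℕ) := by ring
    rw [a1, a2, a3]
    ring
  · intro i
    simp [Rf_zero hH]

lemma Rf_le_one {B : ℝ → Ω → ℝ} {H : ℝ} (hH : 0 < H) (hB : IsFractionalBrownianMotion B H)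
    (z : ℤ) : |Rf H z| ≤ 1 := by
  have hnat : ∀ m : ℕ, |Rf H (m : ℤ)| ≤ 1 := by
    intro m
    have h := fbm_GF hH hB (m + 1) (by omega)
    set i : Fin (m + 1) := Fin.last m
    set j : Fin (m + 1) := 0
    have hc := h.cov i j
    have hi := h.cov i i
    have hj := h.cov j j
    simp only [i, j, Fin.val_last, sub_self, Rf_zero hH, Fin.val_zero, Nat.cast_zero,
      sub_zero] at hc hi hj
    rw [← hc]
    have L2 : ∀ k, MemLp (Xn B H (m + 1) k) 2 (ℙ : Measure Ω) := fun k => by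
      simpa using h.allLp k 2
    have I : ∀ k l, Integrable (fun ω => Xn B H (m + 1) k ω * Xn B H (m + 1) l ω) (ℙ : Measure Ω) :=
      fun k l => (L2 k).integrable_mul (L2 l)
    have i1 := (I (Fin.last m) 0).const_mul 2
    have i2 : Integrable (fun ω => Xn B H (m + 1) (Fin.last m) ω * Xn B H (m + 1) (Fin.last m) ω
      + Xn B H (m + 1) 0 ω * Xn B H (m + 1) 0 ω) (ℙ : Measure Ω) := (I _ _).add (I _ _)
    have m1 := integral_mono i1 i2 (fun ω => by
      have := sq_nonneg (Xn B H (m + 1) (Fin.last m) ω - Xn B H (m + 1) 0 ω)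
      show 2 * (_ * _) ≤ _ * _ + _ * _
      nlinarith)
    have m2 := integral_mono i1.neg i2 (fun ω => by
      have := sq_nonneg (Xn B H (m + 1) (Fin.last m) ω + Xn B H (m + 1) 0 ω)
      show -(2 * (_ * _)) ≤ _ * _ + _ * _
      nlinarith)
    rw [integral_add (I _ _) (I _ _), integral_const_mul, hi, hj] at m1
    simp only [Pi.neg_apply] at m2
    rw [integral_neg, integral_add (I _ _) (I _ _), integral_const_mul, hi, hj] at m2
    rw [abs_le]
    constructor <;> linarith
  rcases Int.eq_nat_or_neg z with ⟨m, rfl | rfl⟩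
  · exact hnat m
  · rw [Rf_neg]; exact hnat m

end fbm

section conclusion

variable {Ω : Type*} [MeasureSpace Ω] [IsProbabilityMeasure (ℙ : Measure Ω)]

lemma Gam_lim {B : ℝ → Ω → ℝ} {H : ℝ} (hH : 0 < H) (hB : IsFractionalBrownianMotion B H) (p : ℕ)
    (hS : Summable fun z : ℤ => |Rf H z| ^ (p + 1)) :
    Tendsto (fun n : ℕ => ∫ ω, |(p + 1).factorial * (∑' z : ℤ, Rf H z ^ (p + 1))
      - Gam (Xn B H n) (fun i j : Fin n => Rf H ((i : ℤ) - j)) p ω / n| ∂(ℙ : Measure Ω))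
      atTop (𝓝 0) := by
  obtain ⟨C, hC, hG⟩ := Gam_var p
  have hS' : Summable fun z : ℤ => Rf H z ^ (p + 1) := by
    refine Summable.of_norm ?_
    simpa only [norm_pow, Real.norm_eq_abs] using hS
  set v : ℝ := (p + 1).factorial * (∑' z : ℤ, Rf H z ^ (p + 1)) with hv
  set m : ℕ → ℝ := fun n => (p + 1).factorial *
    ∑ i : Fin n, ∑ j : Fin n, Rf H ((i : ℤ) - j) ^ (p + 1) with hm
  have h1 : Tendsto (fun n : ℕ => |v - m n / n|) atTop (𝓝 0) := by
    have := (sum_lim hS').const_mul ((p + 1).factorial : ℝ)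
    have h2 : Tendsto (fun n : ℕ => m n / n) atTop (𝓝 v) := by
      refine this.congr fun n => ?_
      rw [mul_div_assoc']
    have h3 := (tendsto_const_nhds (x := v)).sub h2
    rw [sub_self] at h3
    simpa using h3.abs
  have h2 : Tendsto (fun n : ℕ => √(C * ∑ e ∈ expo p,
      Q4 (fun i j : Fin n => Rf H ((i : ℤ) - j)) e / (n : ℝ) ^ 2)) atTop (𝓝 0) := by
    have h3 := (tendsto_finsetSum (expo p) fun e he =>
      Q4_lim (Rf_le_one hH hB) hS he).const_mul C
    simp only [Finset.sum_const_zero, mul_zero] at h3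
    have := (Real.continuous_sqrt.tendsto 0).comp h3
    rw [Real.sqrt_zero] at this
    exact this
  have h3 := h1.add h2
  rw [add_zero] at h3
  refine squeeze_zero' (Eventually.of_forall fun n => integral_nonneg fun ω => abs_nonneg _)
    ?_ h3
  filter_upwards [eventually_gt_atTop 0] with n hn
  have hn' : (0 : ℝ) < n := by exact_mod_cast hn
  have hGF := fbm_GF hH hB n hn
  refine (D_bound (Gam_allLp hGF p) v (m n) n hn').trans ?_
  gcongr
  rw [← Finset.sum_div, mul_div_assoc']
  gcongr
  exact hG hGF

lemma char_lim {B : ℝ → Ω → ℝ} {H : ℝ} (hH : 0 < H) (hB : IsFractionalBrownianMotion B H) (p : ℕ)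
    (hS : Summable fun z : ℤ => |Rf H z| ^ (p + 1)) (v : ℝ) (hv0 : 0 ≤ v)
    (hv : v = (p + 1).factorial * (∑' z : ℤ, Rf H z ^ (p + 1))) (t : ℝ) :
    Tendsto (fun n : ℕ => ∫ ω, Complex.exp (Complex.I * ((t / √(n : ℝ) : ℝ) : ℂ) *
      (Vv (Xn B H n) (p + 1) ω : ℂ)) ∂(ℙ : Measure Ω)) atTop
      (𝓝 (Complex.exp ((-(v * t ^ 2 / 2) : ℝ)))) := by
  have h0 := Gam_lim hH hB p hS
  rw [← hv] at h0
  have h1 := ((h0.const_mul (rexp (v * t ^ 2 / 2) * |t|)).mul_const |t|)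
  rw [mul_zero, zero_mul] at h1
  have h2 : Tendsto (fun n : ℕ => Complex.exp ((v * t ^ 2 / 2 : ℝ)) *
      (∫ ω, Complex.exp (Complex.I * ((t / √(n : ℝ) : ℝ) : ℂ) *
        (Vv (Xn B H n) (p + 1) ω : ℂ)) ∂(ℙ : Measure Ω)) - 1) atTop (𝓝 0) := by
    refine squeeze_zero_norm' ?_ h1
    filter_upwards [eventually_gt_atTop 0] with n hn
    exact charfun_bd (fbm_GF hH hB n hn) p n v (by exact_mod_cast hn) hv0 t
  have h3 := (h2.add_const 1).const_mul (Complex.exp ((-(v * t ^ 2 / 2) : ℝ)))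
  rw [zero_add, mul_one] at h3
  refine h3.congr fun n => ?_
  rw [sub_add_cancel, ← mul_assoc, ← Complex.exp_add, ← Complex.ofReal_add]
  simp

lemma hermiteVariation_eq (B : ℝ → Ω → ℝ) (H : ℝ) (q n : ℕ) (ω : Ω) :
    hermiteVariation B H q n ω = Vv (Xn B H n) q ω := by
  unfold hermiteVariation Vv
  rw [Finset.sum_range]
  rfl

lemma hermiteVariation_measurable {B : ℝ → Ω → ℝ} {H : ℝ}
    (hB : IsFractionalBrownianMotion B H) (q n : ℕ) : Measurable (hermiteVariation B H q n) := by
  unfold hermiteVariation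
  refine Finset.measurable_sum _ fun k _ => ?_
  exact (Polynomial.continuous_aeval (Polynomial.hermite q)).measurable.comp
    (((hB.measurable _).sub (hB.measurable _)).const_mul _)

end conclusion

end BM

theorem stmt_0 {Ω : Type*} [MeasureSpace Ω] [IsProbabilityMeasure (ℙ : Measure Ω)]
    (q : ℕ) (hq : 2 ≤ q) (H : ℝ) (hH0 : 0 < H) (hH1 : H < 1 - 1 / (2 * q))
    (B : ℝ → Ω → ℝ) (hB : IsFractionalBrownianMotion B H) :
    ∃ c : ℝ, 0 < c ∧
      TendstoInDistribution
        (fun n ω => hermiteVariation B H q n ω / (c * Real.sqrt n))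
        (gaussianReal 0 1) := by
  have hq0 : (0 : ℝ) < q := by exact_mod_cast (by omega : 0 < q)
  have hlt : H < 1 := by
    have : (0 : ℝ) < 1 / (2 * q) := by positivity
    linarith
  have hqH : 1 < q * (2 - 2 * H) := by
    have h1 : 1 / (2 * (q : ℝ)) < 1 - H := by linarith
    rw [div_lt_iff₀ (by positivity)] at h1
    linarith
  have hS := BM.Rf_summable hH0 hlt q hqH
  have hpos := BM.Rf_sum_pos hH0 hlt q hq hqH
  set v : ℝ := q.factorial * (∑' z : ℤ, BM.Rf H z ^ q) with hv
  have hv0 : 0 < v := by positivity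
  have hc : 0 < √v := Real.sqrt_pos.2 hv0
  refine ⟨√v, hc, ?_⟩
  obtain ⟨p, rfl⟩ : ∃ p, q = p + 1 := ⟨q - 1, by omega⟩
  have hmeas : ∀ n : ℕ, AEMeasurable (fun ω => hermiteVariation B H (p + 1) n ω / (√v * √(n : ℝ)))
      (ℙ : Measure Ω) := fun n =>
    ((BM.hermiteVariation_measurable hB (p + 1) n).div_const _).aemeasurable
  let μ : ℕ → ProbabilityMeasure ℝ := fun n =>
    ⟨Measure.map (fun ω => hermiteVariation B H (p + 1) n ω / (√v * √(n : ℝ))) (ℙ : Measure Ω),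
      Measure.isProbabilityMeasure_map (hmeas n)⟩
  let μ₀ : ProbabilityMeasure ℝ := ⟨gaussianReal 0 1, inferInstance⟩
  have hconv : Tendsto μ atTop (𝓝 μ₀) := by
    rw [ProbabilityMeasure.tendsto_iff_tendsto_charFun]
    intro t
    show Tendsto (fun n => charFun (Measure.map _ (ℙ : Measure Ω)) t) atTop
      (𝓝 (charFun (gaussianReal 0 1) t))
    have h := BM.char_lim hH0 hB p hS v hv0.le hv (t / √v)
    have hlim : Complex.exp ((-(v * (t / √v) ^ 2 / 2) : ℝ)) = charFun (gaussianReal 0 1) t := by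
      rw [charFun_gaussianReal, div_pow, Real.sq_sqrt hv0.le, mul_div_cancel₀ _ hv0.ne']
      congr 1
      push_cast
      ring
    rw [hlim] at h
    refine h.congr fun n => ?_
    rw [charFun_apply_real, integral_map (hmeas n) (by fun_prop)]
    refine integral_congr_ae (Eventually.of_forall fun ω => ?_)
    simp only [BM.hermiteVariation_eq]
    congr 1
    push_cast
    rw [div_div]
    ring
  rw [ProbabilityMeasure.tendsto_iff_forall_integral_tendsto] at hconv
  intro f
  have := hconv f
  refine this.congr fun n => ?_
  show ∫ x, f x ∂(Measure.map _ (ℙ : Measure Ω)) = _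
  rw [integral_map (hmeas n) f.continuous.aestronglyMeasurable]
end

section
/- Let q ≥ 2 be an integer and 1 − 1/(2q) < H < 1. Then there exist a constant c_{2,q,H} > 0 (depending only on q and H) and a random variable Z with E Z² = 1 such that V_n/(c_{2,q,H} n^{1−q(1−H)}) converges to Z in L²(Ω) as n → ∞. -/
open MeasureTheory ProbabilityTheory Filter Real Topology

lemma integrable_poly_mul_poly {Ω : Type*} [MeasurableSpace Ω] {μ : Measure Ω} [IsFiniteMeasure μ]
    {X Y : Ω → ℝ} (hX : ∀ k : ℕ, MemLp X k μ) (hY : ∀ k : ℕ, MemLp Y k μ)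
    (f g : Polynomial ℝ) : Integrable (fun ω => f.eval (X ω) * g.eval (Y ω)) μ := by
  have key : ∀ a b : ℕ, Integrable (fun ω => X ω ^ a * Y ω ^ b) μ := by
    intro a b
    have h1 : Integrable (fun ω => ‖X ω‖ ^ (2 * a)) μ := (hX (2 * a)).integrable_norm_pow'
    have h2 : Integrable (fun ω => ‖Y ω‖ ^ (2 * b)) μ := (hY (2 * b)).integrable_norm_pow'
    refine (h1.add h2).mono' ?_ ?_
    · exact ((hX 0).1.pow a).mul ((hY 0).1.pow b)
    · refine Eventually.of_forall fun ω => ?_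
      simp only [norm_mul, norm_pow, Pi.add_apply, pow_mul']
      nlinarith [sq_nonneg (‖X ω‖ ^ a - ‖Y ω‖ ^ b), sq_nonneg (‖X ω‖ ^ a), sq_nonneg (‖Y ω‖ ^ b)]
  simp only [Polynomial.eval_eq_sum_range, Finset.sum_mul_sum]
  refine integrable_finsetSum _ fun i _ => integrable_finsetSum _ fun j _ => ?_
  refine ((key i j).const_mul (f.coeff i * g.coeff j)).congr (Eventually.of_forall fun ω => ?_)
  show _ = _
  ring

lemma memLp_two_poly {Ω : Type*} [MeasurableSpace Ω] {μ : Measure Ω} [IsFiniteMeasure μ]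
    {X : Ω → ℝ} (hX : ∀ k : ℕ, MemLp X k μ) (f : Polynomial ℝ) :
    MemLp (fun ω => f.eval (X ω)) 2 μ := by
  rw [memLp_two_iff_integrable_sq]
  · simp only [sq]
    exact integrable_poly_mul_poly hX hX f f
  · exact f.continuous.comp_aestronglyMeasurable (hX 0).1

lemma integrable_poly_gaussian (f : Polynomial ℝ) :
    Integrable (fun x => f.eval x) (gaussianReal 0 1) := by
  have h : ∀ k : ℕ, MemLp (fun x : ℝ => x) k (gaussianReal 0 1) := fun k =>
    memLp_id_gaussianReal' k (by simp)
  simpa using integrable_poly_mul_poly h h f 1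

lemma stein_poly (f : Polynomial ℝ) :
    ∫ x, x * f.eval x ∂(gaussianReal 0 1) = ∫ x, f.derivative.eval x ∂(gaussianReal 0 1) := by
  have hint : ∀ p : Polynomial ℝ, Integrable (fun x => p.eval x * gaussianPDFReal 0 1 x) := by
    intro p
    have := integrable_poly_gaussian p
    rw [gaussianReal_of_var_ne_zero 0 one_ne_zero,
      integrable_withDensity_iff_integrable_smul₀' (measurable_gaussianPDF 0 1).aemeasurable
       (by simp [gaussianPDF])] at this
    simpa [toReal_gaussianPDF, mul_comm] using this
  have hd : ∀ x, HasDerivAt (gaussianPDFReal 0 1) (- (x * gaussianPDFReal 0 1 x)) x := by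
    intro x
    have : HasDerivAt (fun x : ℝ => (√(2 * π * (1:NNReal)))⁻¹ * rexp (-(x - 0) ^ 2 / (2 * (1:NNReal))))
        ((√(2 * π * (1:NNReal)))⁻¹ * (rexp (-(x - 0) ^ 2 / (2 * (1:NNReal))) * (-(2 * x)/2))) x := by
      refine HasDerivAt.const_mul _ (HasDerivAt.exp ?_)
      simpa using (((hasDerivAt_id x).pow 2).neg.div_const 2)
    rw [gaussianPDFReal_def]
    convert this using 1
    ring
  have := integral_mul_deriv_eq_deriv_mul_of_integrable (u := fun x => f.eval x)
    (v := gaussianPDFReal 0 1) (u' := fun x => f.derivative.eval x)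
    (v' := fun x => - (x * gaussianPDFReal 0 1 x)) (fun x _ => f.hasDerivAt x) (fun x _ => hd x)
    ?_ (hint _) (hint _)
  · rw [integral_gaussianReal_eq_integral_smul one_ne_zero,
      integral_gaussianReal_eq_integral_smul one_ne_zero]
    have h2 := congrArg (fun t => -t) this
    simp only [neg_neg, ← integral_neg] at h2
    simp only [smul_eq_mul]
    calc _ = _ := by
          refine integral_congr_ae (Eventually.of_forall fun x => ?_)
          show _ = -(f.eval x * -(x * gaussianPDFReal 0 1 x))
          ring
      _ = _ := h2
      _ = _ := by simp only [mul_comm]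
  · have := (hint (Polynomial.X * f)).neg
    refine this.congr (Eventually.of_forall fun x => ?_)
    simp
    ring

lemma stein_two {Ω : Type*} [MeasurableSpace Ω] {μ : Measure Ω} [IsProbabilityMeasure μ]
    {X W Y : Ω → ℝ} (hXm : Measurable X) (hWm : Measurable W)
    (hlaw : μ.map X = gaussianReal 0 1) (hind : IndepFun X W μ)
    (hX : ∀ k : ℕ, MemLp X k μ) (hY : ∀ k : ℕ, MemLp Y k μ) (ρ : ℝ)
    (hYe : ∀ ω, Y ω = ρ * X ω + W ω) (f g : Polynomial ℝ) :
    ∫ ω, X ω * f.eval (X ω) * g.eval (Y ω) ∂μ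
      = ∫ ω, f.derivative.eval (X ω) * g.eval (Y ω) ∂μ
        + ρ * ∫ ω, f.eval (X ω) * g.derivative.eval (Y ω) ∂μ := by
  have hmap := (indepFun_iff_map_prod_eq_prod_map_map hXm.aemeasurable hWm.aemeasurable).1 hind
  have : IsProbabilityMeasure (μ.map W) := Measure.isProbabilityMeasure_map hWm.aemeasurable
  have hXWm : Measurable (fun ω => (X ω, W ω)) := hXm.prodMk hWm
  rw [hlaw] at hmap
  have fub : ∀ a b : Polynomial ℝ, ∫ ω, a.eval (X ω) * b.eval (Y ω) ∂μ
      = ∫ w, ∫ x, a.eval x * b.eval (ρ * x + w) ∂(gaussianReal 0 1) ∂(μ.map W) ∧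
      Integrable (fun w => ∫ x, a.eval x * b.eval (ρ * x + w) ∂(gaussianReal 0 1)) (μ.map W) := by
    intro a b
    have hc : Continuous (fun z : ℝ × ℝ => a.eval z.1 * b.eval (ρ * z.1 + z.2)) := by
      have := a.continuous; have := b.continuous; fun_prop
    have hi : Integrable (fun z : ℝ × ℝ => a.eval z.1 * b.eval (ρ * z.1 + z.2))
        ((gaussianReal 0 1).prod (μ.map W)) := by
      rw [← hmap, integrable_map_measure hc.aestronglyMeasurable hXWm.aemeasurable]
      refine (integrable_poly_mul_poly hX hY a b).congr (Eventually.of_forall fun ω => ?_)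
      simp [hYe]
    refine ⟨?_, hi.integral_prod_right⟩
    rw [← integral_prod_symm _ hi, ← hmap, integral_map hXWm.aemeasurable hc.aestronglyMeasurable]
    simp [hYe]
  have h0 := fub (Polynomial.X * f) g
  have h1 := fub f.derivative g
  have h2 := fub f g.derivative
  simp only [Polynomial.eval_mul, Polynomial.eval_X] at h0
  rw [h0.1, h1.1, h2.1, ← integral_const_mul, ← integral_add h1.2 (h2.2.const_mul _)]
  refine integral_congr_ae (Eventually.of_forall fun w => ?_)
  have s := stein_poly (f * g.comp (Polynomial.C ρ * Polynomial.X + Polynomial.C w))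
  have e1 := integrable_poly_gaussian
    (f.derivative * g.comp (Polynomial.C ρ * Polynomial.X + Polynomial.C w))
  have e2 := integrable_poly_gaussian
    (f * g.derivative.comp (Polynomial.C ρ * Polynomial.X + Polynomial.C w))
  simp only [Polynomial.eval_mul, Polynomial.eval_comp, Polynomial.eval_add, Polynomial.eval_C,
    Polynomial.eval_X, Polynomial.derivative_mul, Polynomial.derivative_comp,
    Polynomial.derivative_add, Polynomial.derivative_C, Polynomial.derivative_X, mul_one,
    zero_mul, add_zero, zero_add] at s e1 e2
  simp only [mul_assoc] at s ⊢
  rw [s, ← integral_const_mul, ← integral_add e1 (e2.const_mul _)]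
  congr 1; ext x; ring

lemma hermite_mul_poly {Ω : Type*} [MeasurableSpace Ω] {μ : Measure Ω} [IsProbabilityMeasure μ]
    {X W Y : Ω → ℝ} (hXm : Measurable X) (hWm : Measurable W)
    (hlaw : μ.map X = gaussianReal 0 1) (hind : IndepFun X W μ)
    (hX : ∀ k : ℕ, MemLp X k μ) (hY : ∀ k : ℕ, MemLp Y k μ) (ρ : ℝ)
    (hYe : ∀ ω, Y ω = ρ * X ω + W ω) (q : ℕ) : ∀ (g : Polynomial ℝ),
    ∫ ω, ((Polynomial.hermite q).map (Int.castRingHom ℝ)).eval (X ω) * g.eval (Y ω) ∂μ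
      = ρ ^ q * ∫ ω, (Polynomial.derivative^[q] g).eval (Y ω) ∂μ := by
  induction q with
  | zero => intro g; simp
  | succ q ih =>
    intro g
    have := stein_two hXm hWm hlaw hind hX hY ρ hYe
      ((Polynomial.hermite q).map (Int.castRingHom ℝ)) g
    rw [Polynomial.hermite_succ, Function.iterate_succ, pow_succ, Function.comp,
      mul_right_comm, ← ih, mul_comm _ ρ, eq_sub_of_add_eq' this.symm, ← integral_sub]
    · congr 1; ext ω
      simp only [Polynomial.map_sub, Polynomial.map_mul, Polynomial.map_X, Polynomial.eval_sub,
        Polynomial.eval_mul, Polynomial.eval_X, Polynomial.derivative_map]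
      ring
    · have h := integrable_poly_mul_poly hX hY
        (Polynomial.X * (Polynomial.hermite q).map (Int.castRingHom ℝ)) g
      simp only [Polynomial.eval_mul, Polynomial.eval_X] at h
      exact h
    · exact integrable_poly_mul_poly hX hY _ _

/-- Orthogonality of Hermite polynomials of jointly Gaussian variables. -/
lemma hermite_mul_hermite {Ω : Type*} [MeasurableSpace Ω] {μ : Measure Ω} [IsProbabilityMeasure μ]
    {X Y : Ω → ℝ} (hXm : Measurable X) (hYm : Measurable Y)
    (hG : HasGaussianLaw (fun ω => (X ω, Y ω)) μ)
    (hlaw : μ.map X = gaussianReal 0 1) (q : ℕ) :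
    ∫ ω, ((Polynomial.hermite q).map (Int.castRingHom ℝ)).eval (X ω) *
      ((Polynomial.hermite q).map (Int.castRingHom ℝ)).eval (Y ω) ∂μ
      = q.factorial * (∫ ω, X ω * Y ω ∂μ) ^ q := by
  have hX : ∀ k : ℕ, MemLp X k μ := fun k => hG.fst.memLp (by simp)
  have hY : ∀ k : ℕ, MemLp Y k μ := fun k => hG.snd.memLp (by simp)
  have hX0 : μ[X] = 0 := by
    have := integral_id_gaussianReal (μ := 0) (v := 1)
    rw [← hlaw, integral_map hXm.aemeasurable (by fun_prop)] at this
    exact this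
  have hX2 : ∫ ω, X ω * X ω ∂μ = 1 := by
    have h1 := variance_fun_id_gaussianReal (μ := 0) (v := 1)
    rw [variance_of_integral_eq_zero (by fun_prop) integral_id_gaussianReal, ← hlaw,
      integral_map hXm.aemeasurable (by fun_prop)] at h1
    simpa [sq] using h1
  set ρ := ∫ ω, X ω * Y ω ∂μ with hρ
  have hW : HasGaussianLaw (fun ω => (X ω, Y ω - ρ * X ω)) μ := by
    have := hG.map_fun ((ContinuousLinearMap.fst ℝ ℝ ℝ).prod
      (ContinuousLinearMap.snd ℝ ℝ ℝ - ρ • ContinuousLinearMap.fst ℝ ℝ ℝ))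
    simpa using this
  have hXX : Integrable (fun ω => X ω * X ω) μ := by
    simpa using integrable_poly_mul_poly hX hX Polynomial.X Polynomial.X
  have hXY : Integrable (fun ω => X ω * Y ω) μ := by
    simpa using integrable_poly_mul_poly hX hY Polynomial.X Polynomial.X
  have hind : IndepFun X (fun ω => Y ω - ρ * X ω) μ := by
    refine hW.indepFun_of_covariance_eq_zero ?_
    rw [covariance_eq_sub hW.fst.memLp_two hW.snd.memLp_two, hX0, zero_mul, sub_zero]
    simp only [Pi.mul_apply, mul_sub]
    rw [integral_sub hXY ((hXX.const_mul ρ).congr (Eventually.of_forall fun ω => by simp; ring)),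
      ← hρ]
    have : ∫ ω, X ω * (ρ * X ω) ∂μ = ρ := by
      calc _ = ∫ ω, ρ * (X ω * X ω) ∂μ := by congr 1; ext ω; ring
        _ = ρ := by rw [integral_const_mul, hX2, mul_one]
    rw [this, sub_self]
  rw [hermite_mul_poly hXm (W := fun ω => Y ω - ρ * X ω)
    (hYm.sub (hXm.const_mul ρ)) hlaw hind hX hY ρ (fun ω => by ring) q]
  have : Polynomial.derivative^[q] ((Polynomial.hermite q).map (Int.castRingHom ℝ))
      = Polynomial.C (q.factorial : ℝ) := by
    have hm : ((Polynomial.hermite q).map (Int.castRingHom ℝ)).Monic :=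
      (Polynomial.hermite_monic q).map _
    have hd : ((Polynomial.hermite q).map (Int.castRingHom ℝ)).natDegree = q := by
      rw [(Polynomial.hermite_monic q).natDegree_map, Polynomial.natDegree_hermite]
    have h1 := Polynomial.natDegree_iterate_derivative
      ((Polynomial.hermite q).map (Int.castRingHom ℝ)) q
    rw [hd, Nat.sub_self] at h1
    rw [Polynomial.eq_C_of_natDegree_le_zero h1, Polynomial.coeff_iterate_derivative]
    simp [Nat.descFactorial_self]
  rw [this]
  simp [mul_comm]

/-- The (normalized) derivative of `|z|^p`. -/
noncomputable def kerG (p z : ℝ) : ℝ := |z| ^ (p - 2) * z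

lemma kerG_continuous {p : ℝ} (hp : 1 < p) : Continuous (kerG p) := by
  have h1 : ContDiff ℝ 1 (fun x : ℝ ↦ ‖x‖ ^ p) := contDiff_norm_rpow hp
  have h2 : deriv (fun x : ℝ ↦ ‖x‖ ^ p) = fun x => p * kerG p x := by
    ext x
    simpa [kerG, mul_assoc] using (hasDerivAt_abs_rpow x hp).deriv
  have h3 := h1.continuous_deriv le_rfl
  rw [h2] at h3
  have h4 : kerG p = fun x => p⁻¹ * (p * kerG p x) := by
    ext x; field_simp
  rw [h4]
  exact h3.const_mul _

lemma kerG_hasDerivAt {p z : ℝ} (hz : z ≠ 0) :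
    HasDerivAt (kerG p) ((p - 1) * |z| ^ (p - 2)) z := by
  have h1 := ((hasDerivAt_abs hz).rpow_const (p := p - 2) (Or.inl (abs_ne_zero.2 hz))).mul
    (hasDerivAt_id z)
  refine h1.congr_deriv ?_
  have h2 : |z| ^ (p - 2) = |z| ^ (p - 2 - 1) * |z| := by
    rw [← Real.rpow_add_one (abs_ne_zero.2 hz)]; ring_nf
  have h3 : (SignType.sign z : ℝ) * z = |z| := sign_mul_self z
  simp only [id]
  calc _ = (p - 2) * (|z| ^ (p - 2 - 1) * (SignType.sign z * z)) + |z| ^ (p - 2) := by ring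
    _ = _ := by rw [h3, ← h2]; ring

lemma intervalIntegrable_abs_rpow {r : ℝ} (hr : -1 < r) (a b : ℝ) :
    IntervalIntegrable (fun u : ℝ => |u| ^ r) volume a b := by
  have h0 : ∀ c : ℝ, 0 ≤ c → IntervalIntegrable (fun u : ℝ => |u| ^ r) volume 0 c := by
    intro c hc
    refine (intervalIntegral.intervalIntegrable_rpow' (a := 0) (b := c) hr).congr ?_
    intro u hu
    rw [Set.uIoc_of_le hc] at hu
    simp [abs_of_pos hu.1]
  have h1 : ∀ c : ℝ, IntervalIntegrable (fun u : ℝ => |u| ^ r) volume 0 c := by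
    intro c
    rcases le_total 0 c with h | h
    · exact h0 c h
    · have := (IntervalIntegrable.iff_comp_neg (by simp)).1 (h0 (-c) (by linarith))
      simpa using this
  exact (h1 a).symm.trans (h1 b)

lemma kerG_integral {p : ℝ} (hp : 1 < p) {a b : ℝ} (hab : a ≤ b) :
    (p - 1) * ∫ u in a..b, |u| ^ (p - 2) = kerG p b - kerG p a := by
  rw [← intervalIntegral.integral_const_mul]
  refine integral_eq_of_hasDerivAt_off_countable_of_le (kerG p) _ hab
    (Set.countable_singleton 0) (kerG_continuous hp).continuousOn ?_ ?_
  · intro x hx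
    exact kerG_hasDerivAt (by simpa using hx.2)
  · exact (intervalIntegrable_abs_rpow (by linarith) a b).const_mul _

lemma kerG_mono {p : ℝ} (hp : 1 < p) : Monotone (kerG p) := by
  intro a b hab
  have h := kerG_integral hp hab
  have : 0 ≤ ∫ u in a..b, |u| ^ (p - 2) :=
    intervalIntegral.integral_nonneg hab fun u _ => by positivity
  nlinarith

lemma abs_kerG {p : ℝ} (hp : 1 < p) (z : ℝ) : |kerG p z| = |z| ^ (p - 1) := by
  rcases eq_or_ne z 0 with rfl | hz
  · simp [kerG, Real.zero_rpow (by linarith : p - 1 ≠ 0)]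
  · rw [kerG, abs_mul, abs_of_nonneg (by positivity), ← Real.rpow_add_one (abs_ne_zero.2 hz)]
    ring_nf

lemma kerG_bound {p : ℝ} (hp : 1 < p) (hp2 : p < 2) {a b w : ℝ} (ha : a ≤ w) (hb : w ≤ b)
    (hw : w ≠ 0) : kerG p b - kerG p a ≤ 6 * (b - a) * |w| ^ (p - 2) := by
  have hwp : 0 < |w| := abs_pos.2 hw
  have hab : a ≤ b := ha.trans hb
  rcases le_or_gt (2 * (b - a)) |w| with h | h
  · rw [← kerG_integral hp hab]
    have h1 : ∫ u in a..b, |u| ^ (p - 2) ≤ ∫ u in a..b, 2 * |w| ^ (p - 2) := by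
      refine intervalIntegral.integral_mono_on hab (intervalIntegrable_abs_rpow (by linarith) a b)
        (by simp) fun u hu => ?_
      have h2 : |w| / 2 ≤ |u| := by
        have : |w| ≤ |u| + |w - u| := by
          have := abs_add_le u (w - u); simpa using this
        have : |w - u| ≤ b - a := abs_le.2 ⟨by linarith [hu.1, hu.2], by linarith [hu.1, hu.2]⟩
        linarith
      have h3 : |u| ^ (p - 2) ≤ (|w| / 2) ^ (p - 2) :=
        Real.rpow_le_rpow_of_nonpos (by positivity) h2 (by linarith)
      refine h3.trans ?_
      rw [Real.div_rpow hwp.le (by norm_num), div_eq_mul_inv, mul_comm,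
        ← Real.rpow_neg (by norm_num)]
      refine mul_le_mul_of_nonneg_right ?_ (by positivity)
      calc (2:ℝ) ^ (-(p-2)) ≤ 2 ^ (1:ℝ) :=
            Real.rpow_le_rpow_of_exponent_le (by norm_num) (by linarith)
        _ = 2 := by simp
    rw [intervalIntegral.integral_const, smul_eq_mul] at h1
    have h4 : 0 ≤ (b - a) * |w| ^ (p - 2) := mul_nonneg (by linarith) (by positivity)
    nlinarith
  · have hL : 0 < b - a := by linarith
    have key : ∀ z : ℝ, |z| ≤ 3 * (b - a) → |kerG p z| ≤ 3 * (b - a) * |w| ^ (p - 2) := by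
      intro z hz
      rw [abs_kerG hp]
      calc |z| ^ (p - 1) ≤ (3 * (b - a)) ^ (p - 1) :=
            Real.rpow_le_rpow (abs_nonneg _) hz (by linarith)
        _ = 3 * (b - a) * (3 * (b - a)) ^ (p - 2) := by
            rw [mul_comm (3 * (b - a)) (_ ^ _), ← Real.rpow_add_one (by positivity)]; ring_nf
        _ ≤ _ := by
            refine mul_le_mul_of_nonneg_left ?_ (by positivity)
            exact Real.rpow_le_rpow_of_nonpos hwp (by linarith) (by linarith)
    have hw2 := abs_lt.1 h
    have h1 := key b (abs_le.2 ⟨by linarith [hw2.1, hw2.2], by linarith [hw2.1, hw2.2]⟩)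
    have h2 := key a (abs_le.2 ⟨by linarith [hw2.1, hw2.2], by linarith [hw2.1, hw2.2]⟩)
    have := le_abs_self (kerG p b)
    have := neg_abs_le (kerG p a)
    linarith

/-- Second difference of `|z|^p`. -/
noncomputable def secD (p a b c d : ℝ) : ℝ :=
  |b - c| ^ p + |a - d| ^ p - |b - d| ^ p - |a - c| ^ p

lemma secD_hasDerivAt {p : ℝ} (hp : 1 < p) (c d u : ℝ) :
    HasDerivAt (fun u => |u - c| ^ p - |u - d| ^ p) (p * (kerG p (u - c) - kerG p (u - d))) u := by
  have h1 := (hasDerivAt_abs_rpow (u - c) hp).comp_sub_const u c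
  have h2 := (hasDerivAt_abs_rpow (u - d) hp).comp_sub_const u d
  refine (h1.sub h2).congr_deriv ?_
  simp only [kerG]; ring

lemma secD_integral {p : ℝ} (hp : 1 < p) (a b c d : ℝ) :
    secD p a b c d = ∫ u in a..b, p * (kerG p (u - c) - kerG p (u - d)) := by
  have hc := kerG_continuous hp
  rw [intervalIntegral.integral_eq_sub_of_hasDerivAt (fun u _ => secD_hasDerivAt hp c d u)]
  · simp only [secD]; ring
  · exact Continuous.intervalIntegrable (by fun_prop) _ _

lemma secD_nonneg {p : ℝ} (hp : 1 < p) {a b c d : ℝ} (hab : a ≤ b) (hcd : c ≤ d) :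
    0 ≤ secD p a b c d := by
  rw [secD_integral hp]
  refine intervalIntegral.integral_nonneg hab fun u _ => ?_
  have := kerG_mono hp (by linarith : u - d ≤ u - c)
  exact mul_nonneg (by linarith) (by linarith)

lemma secD_le {p : ℝ} (hp : 1 < p) (hp2 : p < 2) {a b c d x y : ℝ} (hax : a ≤ x) (hxb : x ≤ b)
    (hcy : c ≤ y) (hyd : y ≤ d) (hxy : x ≠ y) :
    secD p a b c d ≤ 36 * p / (p - 1) * ((b - a) * (d - c)) * |x - y| ^ (p - 2) := by
  have hab := hax.trans hxb
  have hc := kerG_continuous hp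
  rw [secD_integral hp]
  have hi : IntervalIntegrable (fun u => |u - y| ^ (p - 2)) volume a b := by
    have := (intervalIntegrable_abs_rpow (r := p - 2) (by linarith) (a - y) (b - y)).comp_sub_right y
    simpa using this
  have h1 : ∫ u in a..b, p * (kerG p (u - c) - kerG p (u - d)) ≤
      ∫ u in a..b, (6 * p * (d - c)) * |u - y| ^ (p - 2) := by
    refine intervalIntegral.integral_mono_ae hab (Continuous.intervalIntegrable (by fun_prop) _ _)
      (hi.const_mul _) ?_
    have : ∀ᵐ u : ℝ, u ≠ y := by simp [ae_iff]
    filter_upwards [this] with u hu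
    have := kerG_bound hp hp2 (by linarith : u - d ≤ u - y) (by linarith : u - y ≤ u - c)
      (sub_ne_zero.2 hu)
    calc _ ≤ p * (6 * (u - c - (u - d)) * |u - y| ^ (p - 2)) :=
          mul_le_mul_of_nonneg_left this (by linarith)
      _ = _ := by ring
  refine h1.trans ?_
  rw [intervalIntegral.integral_const_mul, intervalIntegral.integral_comp_sub_right
    (fun u => |u| ^ (p - 2)) y]
  have h2 := kerG_integral hp (by linarith : a - y ≤ b - y)
  have h3 := kerG_bound hp hp2 (by linarith : a - y ≤ x - y) (by linarith : x - y ≤ b - y)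
    (sub_ne_zero.2 hxy)
  rw [← h2] at h3
  have hp1 : 0 < p - 1 := by linarith
  have h4 : ∫ u in (a - y)..(b - y), |u| ^ (p - 2) ≤ 6 * (b - a) * |x - y| ^ (p - 2) / (p - 1) := by
    rw [le_div_iff₀ hp1]
    linarith
  calc _ ≤ 6 * p * (d - c) * (6 * (b - a) * |x - y| ^ (p - 2) / (p - 1)) :=
        mul_le_mul_of_nonneg_left h4 (mul_nonneg (by linarith) (by linarith))
    _ = _ := by ring

lemma secD_mvt {p : ℝ} (hp : 1 < p) {a b c d : ℝ} (hab : a < b) (hcd : c < d)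
    (hdis : ∀ u ∈ Set.Icc a b, ∀ v ∈ Set.Icc c d, u ≠ v) :
    ∃ ξ ∈ Set.Icc a b, ∃ η ∈ Set.Icc c d,
      secD p a b c d = p * (p - 1) * ((b - a) * (d - c)) * |ξ - η| ^ (p - 2) := by
  obtain ⟨ξ, hξ, h1⟩ := exists_hasDerivAt_eq_slope _ _ hab
    (HasDerivAt.continuousOn fun u _ => secD_hasDerivAt hp c d u)
    (fun u _ => secD_hasDerivAt hp c d u)
  have hξ' := Set.Ioo_subset_Icc_self hξ
  have hd : ∀ v ∈ Set.Icc c d, HasDerivAt (fun v => kerG p (ξ - v))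
      (-((p - 1) * |ξ - v| ^ (p - 2))) v := fun v hv =>
    (kerG_hasDerivAt (p := p) (sub_ne_zero.2 (hdis ξ hξ' v hv))).comp_const_sub ξ v
  obtain ⟨η, hη, h2⟩ := exists_hasDerivAt_eq_slope _ _ hcd
    (HasDerivAt.continuousOn hd) (fun v hv => hd v (Set.Ioo_subset_Icc_self hv))
  refine ⟨ξ, hξ', η, Set.Ioo_subset_Icc_self hη, ?_⟩
  rw [eq_div_iff (by linarith)] at h1 h2
  have h3 : secD p a b c d = p * (kerG p (ξ - c) - kerG p (ξ - d)) * (b - a) := by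
    rw [h1]; simp only [secD]; ring
  rw [h3]
  linear_combination (p * (b - a)) * h2

lemma integrable_kernel_square {r : ℝ} (hr : -1 < r) :
    Integrable (fun z : ℝ × ℝ => |z.1 - z.2| ^ r)
      ((volume.restrict (Set.Ioc (0:ℝ) 1)).prod (volume.restrict (Set.Ioc (0:ℝ) 1))) := by
  have hm : Measurable (fun z : ℝ × ℝ => |z.1 - z.2| ^ r) := by fun_prop
  have hi : ∀ x : ℝ, IntervalIntegrable (fun y => |x - y| ^ r) volume 0 1 := by
    intro x
    have := (intervalIntegrable_abs_rpow hr (x - 0) (x - 1)).comp_sub_left x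
    simpa using this
  rw [integrable_prod_iff hm.aestronglyMeasurable]
  refine ⟨Eventually.of_forall fun x => ?_, ?_⟩
  · have := hi x
    rwa [intervalIntegrable_iff_integrableOn_Ioc_of_le zero_le_one] at this
  · have hc := kerG_continuous (p := r + 2) (by linarith)
    have : (fun x : ℝ => ∫ y in Set.Ioc (0:ℝ) 1, ‖|x - y| ^ r‖) =
        fun x => (kerG (r + 2) (x - 0) - kerG (r + 2) (x - 1)) / (r + 1) := by
      ext x
      have h1 := kerG_integral (p := r + 2) (by linarith) (by linarith : x - 1 ≤ x - 0)
      have e1 : r + 2 - 1 = r + 1 := by ring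
      have e2 : r + 2 - 2 = r := by ring
      rw [e1, e2] at h1
      rw [← h1, mul_div_cancel_left₀ _ (by linarith),
        ← intervalIntegral.integral_comp_sub_left (fun u => |u| ^ r) x,
        intervalIntegral.integral_of_le zero_le_one]
      refine integral_congr_ae (Eventually.of_forall fun y => ?_)
      simp only [Real.norm_eq_abs]
      exact abs_of_nonneg (by positivity)
    rw [this]
    exact (Continuous.integrableOn_Icc (by fun_prop)).mono_set Set.Ioc_subset_Icc_self

lemma step_integral (f : ℕ → ℝ) {n : ℕ} (hn : 0 < n) :
    ∫ x in Set.Ioc (0:ℝ) 1, f ⌊(n:ℝ) * x⌋₊ = ∑ k ∈ Finset.range n, f k / n := by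
  have hn' : (0:ℝ) < n := by exact_mod_cast hn
  have hae : ∀ k : ℕ, ∀ᵐ x : ℝ, x ∈ Set.Ioc ((k:ℝ) / n) (((k + 1 : ℕ) : ℝ) / n) →
      f ⌊(n:ℝ) * x⌋₊ = f k := by
    intro k
    have : ∀ᵐ x : ℝ, x ≠ ((k + 1 : ℕ) : ℝ) / n := by simp [ae_iff]
    filter_upwards [this] with x hx hx2
    congr 1
    rw [Nat.floor_eq_iff (mul_nonneg hn'.le (le_trans (by positivity) hx2.1.le))]
    have h1 := hx2.1
    have h2 := lt_of_le_of_ne hx2.2 hx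
    rw [div_lt_iff₀ hn'] at h1
    rw [lt_div_iff₀ hn'] at h2
    push_cast at h2
    constructor <;> linarith
  have hle : ∀ k : ℕ, (k:ℝ) / n ≤ ((k + 1 : ℕ) : ℝ) / n := fun k => by
    gcongr; simp
  have hs := intervalIntegral.sum_integral_adjacent_intervals (μ := volume)
    (f := fun x : ℝ => f ⌊(n:ℝ) * x⌋₊) (a := fun k : ℕ => (k:ℝ) / n) (n := n) ?_
  · simp only [Nat.cast_zero, zero_div, div_self hn'.ne'] at hs
    rw [← intervalIntegral.integral_of_le zero_le_one, ← hs]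
    refine Finset.sum_congr rfl fun k _ => ?_
    have : ∫ x in ((k:ℝ) / n)..(((k + 1 : ℕ) : ℝ) / n), f ⌊(n:ℝ) * x⌋₊
        = ∫ x in ((k:ℝ) / n)..(((k + 1 : ℕ) : ℝ) / n), f k := by
      refine intervalIntegral.integral_congr_ae ?_
      rw [Set.uIoc_of_le (hle k)]
      exact hae k
    rw [this, intervalIntegral.integral_const, smul_eq_mul]
    push_cast
    field_simp
    ring
  · intro k _
    have : IntervalIntegrable (fun _ : ℝ => f k) volume ((k:ℝ) / n) (((k + 1 : ℕ) : ℝ) / n) := by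
      simp
    refine this.congr_ae ?_
    rw [Set.uIoc_of_le (hle k), EventuallyEq, ae_restrict_iff' measurableSet_Ioc]
    filter_upwards [hae k] with x hx hx2
    exact (hx hx2).symm

/-- value of the averaged kernel on the cell `(k, l)` of the `n × m` grid. -/
noncomputable def cellAvg (p : ℝ) (n m k l : ℕ) : ℝ :=
  n * m * secD p ((k:ℝ) / n) (((k:ℝ) + 1) / n) ((l:ℝ) / m) (((l:ℝ) + 1) / m)

lemma floor_cell {n : ℕ} (hn : 0 < n) {x : ℝ} (hx : 0 ≤ x) :
    (⌊(n:ℝ) * x⌋₊ : ℝ) / n ≤ x ∧ x ≤ ((⌊(n:ℝ) * x⌋₊ : ℝ) + 1) / n := by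
  have hn' : (0:ℝ) < n := by exact_mod_cast hn
  constructor
  · rw [div_le_iff₀ hn', mul_comm x]
    exact Nat.floor_le (by positivity)
  · rw [le_div_iff₀ hn', mul_comm x]
    exact (Nat.lt_floor_add_one _).le

lemma cellAvg_nonneg {p : ℝ} (hp : 1 < p) (n m k l : ℕ) : 0 ≤ cellAvg p n m k l := by
  refine mul_nonneg (by positivity) (secD_nonneg hp ?_ ?_) <;> gcongr <;> linarith

lemma cellAvg_le {p : ℝ} (hp : 1 < p) (hp2 : p < 2) {n m : ℕ} (hn : 0 < n) (hm : 0 < m) {x y : ℝ}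
    (hx : 0 ≤ x) (hy : 0 ≤ y) (hxy : x ≠ y) :
    cellAvg p n m ⌊(n:ℝ) * x⌋₊ ⌊(m:ℝ) * y⌋₊ ≤ 36 * p / (p - 1) * |x - y| ^ (p - 2) := by
  have hn' : (0:ℝ) < n := by exact_mod_cast hn
  have hm' : (0:ℝ) < m := by exact_mod_cast hm
  have h := secD_le hp hp2 (floor_cell hn hx).1 (floor_cell hn hx).2 (floor_cell hm hy).1
    (floor_cell hm hy).2 hxy
  have h2 := mul_le_mul_of_nonneg_left h (by positivity : (0:ℝ) ≤ n * m)
  refine h2.trans (le_of_eq ?_)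
  field_simp
  ring

lemma cellAvg_tendsto {p : ℝ} (hp : 1 < p) {x y : ℝ}
    (hx : 0 ≤ x) (hy : 0 ≤ y) (hxy : x ≠ y) :
    Tendsto (fun nm : ℕ × ℕ => cellAvg p nm.1 nm.2 ⌊(nm.1:ℝ) * x⌋₊ ⌊(nm.2:ℝ) * y⌋₊)
      (atTop ×ˢ atTop) (𝓝 (p * (p - 1) * |x - y| ^ (p - 2))) := by
  have hcont : ContinuousAt (fun t : ℝ => p * (p - 1) * |t| ^ (p - 2)) (x - y) := by
    refine ContinuousAt.mul continuousAt_const ?_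
    exact (continuous_abs.continuousAt).rpow_const (Or.inl (abs_ne_zero.2 (sub_ne_zero.2 hxy)))
  have hlim : Tendsto (fun nm : ℕ × ℕ => 1 / (nm.1 : ℝ) + 1 / (nm.2 : ℝ)) (atTop ×ˢ atTop) (𝓝 0) := by
    have h1 := (tendsto_one_div_atTop_nhds_zero_nat (𝕜 := ℝ)).comp
      (tendsto_fst (f := (atTop : Filter ℕ)) (g := (atTop : Filter ℕ)))
    have h2 := (tendsto_one_div_atTop_nhds_zero_nat (𝕜 := ℝ)).comp
      (tendsto_snd (f := (atTop : Filter ℕ)) (g := (atTop : Filter ℕ)))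
    simpa using h1.add h2
  have hpos : ∀ᶠ nm : ℕ × ℕ in (atTop ×ˢ atTop), 0 < nm.1 ∧ 0 < nm.2 :=
    (eventually_gt_atTop 0).prod_mk (eventually_gt_atTop 0)
  rw [Metric.tendsto_nhds]
  intro ε hε
  obtain ⟨δ, hδ, hc⟩ := Metric.continuousAt_iff.1 hcont ε hε
  have h0 : 0 < min δ |x - y| := lt_min hδ (abs_pos.2 (sub_ne_zero.2 hxy))
  filter_upwards [hpos, hlim.eventually (gt_mem_nhds h0)] with nm hnm hsmall
  obtain ⟨n, m⟩ := nm
  obtain ⟨hn, hm⟩ := hnm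
  simp only at hn hm hsmall ⊢
  have hn' : (0:ℝ) < n := by exact_mod_cast hn
  have hm' : (0:ℝ) < m := by exact_mod_cast hm
  have fx := floor_cell hn hx
  have fy := floor_cell hm hy
  rw [add_div] at fx fy
  have close : ∀ u ∈ Set.Icc ((⌊(n:ℝ) * x⌋₊ : ℝ) / n) (((⌊(n:ℝ) * x⌋₊ : ℝ) + 1) / n),
      ∀ v ∈ Set.Icc ((⌊(m:ℝ) * y⌋₊ : ℝ) / m) (((⌊(m:ℝ) * y⌋₊ : ℝ) + 1) / m),
      |(u - v) - (x - y)| < min δ |x - y| := by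
    intro u hu v hv
    rw [add_div] at hu hv
    refine lt_of_le_of_lt ?_ hsmall
    rw [abs_le]
    constructor <;> linarith [hu.1, hu.2, hv.1, hv.2, fx.1, fx.2, fy.1, fy.2]
  obtain ⟨ξ, hξ, η, hη, he⟩ := secD_mvt hp
    (a := (⌊(n:ℝ) * x⌋₊ : ℝ) / n) (b := ((⌊(n:ℝ) * x⌋₊ : ℝ) + 1) / n)
    (c := (⌊(m:ℝ) * y⌋₊ : ℝ) / m) (d := ((⌊(m:ℝ) * y⌋₊ : ℝ) + 1) / m)
    (by gcongr; linarith) (by gcongr; linarith) (by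
      intro u hu v hv huv
      have := (close u hu v hv).trans_le (min_le_right _ _)
      rw [huv, sub_self, zero_sub, abs_neg] at this
      exact lt_irrefl _ this)
  have hE : cellAvg p n m ⌊(n:ℝ) * x⌋₊ ⌊(m:ℝ) * y⌋₊ = p * (p - 1) * |ξ - η| ^ (p - 2) := by
    rw [cellAvg, he]
    field_simp
    ring
  rw [hE]
  exact hc ((close ξ hξ η hη).trans_le (min_le_left _ _))

lemma ae_ne_square : ∀ᵐ z : ℝ × ℝ ∂((volume.restrict (Set.Ioc (0:ℝ) 1)).prod
    (volume.restrict (Set.Ioc (0:ℝ) 1))),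
    0 < z.1 ∧ z.1 ≤ 1 ∧ 0 < z.2 ∧ z.2 ≤ 1 ∧ z.1 ≠ z.2 := by
  have hms : MeasurableSet {z : ℝ × ℝ | 0 < z.1 ∧ z.1 ≤ 1 ∧ 0 < z.2 ∧ z.2 ≤ 1 ∧ z.1 ≠ z.2} := by
    measurability
  rw [Measure.ae_prod_iff_ae_ae hms]
  filter_upwards [ae_restrict_mem measurableSet_Ioc] with x hx
  have : ∀ᵐ y : ℝ, x ≠ y := by simp [ae_iff]
  filter_upwards [ae_restrict_mem measurableSet_Ioc, ae_restrict_of_ae this] with y hy hxy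
  exact ⟨hx.1, hx.2, hy.1, hy.2, hxy⟩

/-- Limit of the double sums. -/
lemma double_sum_tendsto {p : ℝ} (hp : 1 < p) (hp2 : p < 2) (q : ℕ) (hq : -1 < (p - 2) * q) :
    ∃ L : ℝ, 0 < L ∧ Tendsto (fun nm : ℕ × ℕ => ∑ k ∈ Finset.range nm.1, ∑ l ∈ Finset.range nm.2,
      cellAvg p nm.1 nm.2 k l ^ q / (nm.1 * nm.2)) (atTop ×ˢ atTop) (𝓝 L) := by
  set ν := (volume.restrict (Set.Ioc (0:ℝ) 1)).prod (volume.restrict (Set.Ioc (0:ℝ) 1)) with hν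
  have hker : ∀ C : ℝ, Integrable (fun z : ℝ × ℝ => (C * |z.1 - z.2| ^ (p - 2)) ^ q) ν := by
    intro C
    refine ((integrable_kernel_square hq).const_mul (C ^ q)).congr
      (Eventually.of_forall fun z => ?_)
    simp only [mul_pow]
    rw [Real.rpow_mul_natCast (abs_nonneg _)]
  have hmeas : ∀ n m : ℕ, Measurable (fun z : ℝ × ℝ =>
      cellAvg p n m ⌊(n:ℝ) * z.1⌋₊ ⌊(m:ℝ) * z.2⌋₊ ^ q) := by
    intro n m
    have h1 : Measurable (fun w : ℕ × ℕ => cellAvg p n m w.1 w.2 ^ q) := measurable_of_countable _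
    have h2 : Measurable (fun z : ℝ × ℝ => ⌊(n:ℝ) * z.1⌋₊) :=
      Nat.measurable_floor.comp (measurable_fst.const_mul (n:ℝ))
    have h3 : Measurable (fun z : ℝ × ℝ => ⌊(m:ℝ) * z.2⌋₊) :=
      Nat.measurable_floor.comp (measurable_snd.const_mul (m:ℝ))
    have h4 := h1.comp (h2.prodMk h3)
    simpa only [Function.comp_def] using h4
  have hpos : ∀ᶠ nm : ℕ × ℕ in (atTop ×ˢ atTop), 0 < nm.1 ∧ 0 < nm.2 :=
    (eventually_gt_atTop 0).prod_mk (eventually_gt_atTop 0)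
  have hbound : ∀ n m : ℕ, 0 < n → 0 < m → ∀ᵐ z ∂ν,
      ‖cellAvg p n m ⌊(n:ℝ) * z.1⌋₊ ⌊(m:ℝ) * z.2⌋₊ ^ q‖
        ≤ (36 * p / (p - 1) * |z.1 - z.2| ^ (p - 2)) ^ q := by
    intro n m hn hm
    filter_upwards [ae_ne_square] with z hz
    rw [norm_pow, Real.norm_eq_abs, abs_of_nonneg (cellAvg_nonneg hp _ _ _ _)]
    exact pow_le_pow_left₀ (cellAvg_nonneg hp _ _ _ _)
      (cellAvg_le hp hp2 hn hm hz.1.le hz.2.2.1.le hz.2.2.2.2) q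
  refine ⟨∫ z, (p * (p - 1) * |z.1 - z.2| ^ (p - 2)) ^ q ∂ν, ?_, ?_⟩
  · have hp1 : 0 < p * (p - 1) := mul_pos (by linarith) (by linarith)
    have h1 : ∫ z : ℝ × ℝ, (p * (p - 1)) ^ q ∂ν ≤ ∫ z, (p * (p - 1) * |z.1 - z.2| ^ (p - 2)) ^ q ∂ν := by
      refine integral_mono_ae (integrable_const _) (hker _) ?_
      filter_upwards [ae_ne_square] with z hz
      refine pow_le_pow_left₀ hp1.le ?_ q
      refine le_mul_of_one_le_right hp1.le ?_
      refine Real.one_le_rpow_of_pos_of_le_one_of_nonpos (abs_pos.2 (sub_ne_zero.2 hz.2.2.2.2)) ?_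
        (by linarith)
      rw [abs_le]
      constructor <;> linarith [hz.1, hz.2.1, hz.2.2.1, hz.2.2.2.1]
    refine lt_of_lt_of_le ?_ h1
    rw [integral_const]
    have : ν.real Set.univ = 1 := by
      simp [hν, Measure.real, ← Set.univ_prod_univ, Measure.prod_prod]
    rw [this]
    simpa using pow_pos hp1 q
  · have hT : Tendsto (fun nm : ℕ × ℕ => ∫ z, cellAvg p nm.1 nm.2 ⌊(nm.1:ℝ) * z.1⌋₊
        ⌊(nm.2:ℝ) * z.2⌋₊ ^ q ∂ν) (atTop ×ˢ atTop)
        (𝓝 (∫ z, (p * (p - 1) * |z.1 - z.2| ^ (p - 2)) ^ q ∂ν)) := by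
      refine tendsto_integral_filter_of_dominated_convergence
        (fun z => (36 * p / (p - 1) * |z.1 - z.2| ^ (p - 2)) ^ q)
        (Eventually.of_forall fun nm => (hmeas _ _).aestronglyMeasurable) ?_ (hker _) ?_
      · filter_upwards [hpos] with nm hnm
        exact hbound _ _ hnm.1 hnm.2
      · filter_upwards [ae_ne_square] with z hz
        exact (cellAvg_tendsto hp hz.1.le hz.2.2.1.le hz.2.2.2.2).pow q
    refine hT.congr' ?_
    filter_upwards [hpos] with nm hnm
    obtain ⟨n, m⟩ := nm
    simp only at hnm ⊢
    have hI : Integrable (fun z : ℝ × ℝ => cellAvg p n m ⌊(n:ℝ) * z.1⌋₊ ⌊(m:ℝ) * z.2⌋₊ ^ q) ν :=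
      (hker _).mono' (hmeas n m).aestronglyMeasurable (hbound n m hnm.1 hnm.2)
    rw [hν, integral_prod _ hI]
    have e1 : ∀ x : ℝ, ∫ y in Set.Ioc (0:ℝ) 1, cellAvg p n m ⌊(n:ℝ) * x⌋₊ ⌊(m:ℝ) * y⌋₊ ^ q
        = ∑ l ∈ Finset.range m, cellAvg p n m ⌊(n:ℝ) * x⌋₊ l ^ q / m := fun x =>
      step_integral (fun l => cellAvg p n m ⌊(n:ℝ) * x⌋₊ l ^ q) hnm.2
    simp only [e1]
    rw [step_integral (fun k => ∑ l ∈ Finset.range m, cellAvg p n m k l ^ q / m) hnm.1]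
    refine Finset.sum_congr rfl fun k _ => ?_
    rw [Finset.sum_div]
    refine Finset.sum_congr rfl fun l _ => ?_
    rw [div_div, mul_comm (m:ℝ)]

lemma exists_limit_of_inner {Ω : Type*} [MeasurableSpace Ω] {μ : Measure Ω}
    (U : ℕ → Ω → ℝ) (hU : ∀ n, MemLp (U n) 2 μ) {A : ℝ} (hA : 0 < A)
    (hlim : Tendsto (fun nm : ℕ × ℕ => ∫ ω, U nm.1 ω * U nm.2 ω ∂μ) (atTop ×ˢ atTop) (𝓝 A)) :
    ∃ (c : ℝ) (Z : Ω → ℝ), 0 < c ∧ (∫ ω, (Z ω) ^ 2 ∂μ) = 1 ∧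
      Tendsto (fun n : ℕ => eLpNorm (fun ω => c⁻¹ * U n ω - Z ω) 2 μ) atTop (𝓝 0) := by
  set c := √A with hc
  have hc0 : 0 < c := Real.sqrt_pos.2 hA
  have hcc : c * c = A := Real.mul_self_sqrt hA.le
  have hV : ∀ n, MemLp (fun ω => c⁻¹ * U n ω) 2 μ := fun n => (hU n).const_mul _
  obtain ⟨f, hf⟩ : ∃ f : ℕ → Lp ℝ 2 μ, f = fun n => (hV n).toLp _ := ⟨_, rfl⟩
  have hin : ∀ n m, inner ℝ (f n) (f m) = A⁻¹ * ∫ ω, U n ω * U m ω ∂μ := by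
    intro n m
    rw [L2.inner_def, ← integral_const_mul]
    refine integral_congr_ae ?_
    filter_upwards [(hV n).coeFn_toLp, (hV m).coeFn_toLp] with ω h1 h2
    simp only [hf]
    rw [h1, h2, ← hcc]
    simp
    ring
  have hl : Tendsto (fun nm : ℕ × ℕ => (inner ℝ (f nm.1) (f nm.2) : ℝ)) (atTop ×ˢ atTop) (𝓝 1) := by
    simp only [hin]
    have := hlim.const_mul A⁻¹
    rwa [inv_mul_cancel₀ hA.ne'] at this
  have hdiag : Tendsto (fun n : ℕ => (inner ℝ (f n) (f n) : ℝ)) atTop (𝓝 1) :=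
    hl.comp (tendsto_id.prodMk tendsto_id)
  have hcau : CauchySeq f := by
    rw [cauchySeq_iff_tendsto_dist_atTop_0, ← prod_atTop_atTop_eq]
    have h1 : Tendsto (fun nm : ℕ × ℕ => (inner ℝ (f nm.1) (f nm.1) : ℝ) -
        2 * inner ℝ (f nm.1) (f nm.2) + inner ℝ (f nm.2) (f nm.2)) (atTop ×ˢ atTop)
        (𝓝 (1 - 2 * 1 + 1)) :=
      ((hdiag.comp tendsto_fst).sub (hl.const_mul 2)).add (hdiag.comp tendsto_snd)
    have h2 := h1.sqrt
    norm_num at h2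
    refine Tendsto.congr (fun nm => ?_) h2
    rw [dist_eq_norm, ← Real.sqrt_sq (norm_nonneg (f nm.1 - f nm.2)), norm_sub_sq_real]
  obtain ⟨Z, hZ⟩ := cauchySeq_tendsto_of_complete hcau
  refine ⟨c, Z, hc0, ?_, ?_⟩
  · have h1 : Tendsto (fun n : ℕ => (inner ℝ (f n) (f n) : ℝ)) atTop (𝓝 (inner ℝ Z Z)) :=
      hZ.inner hZ
    have h2 := tendsto_nhds_unique h1 hdiag
    rw [L2.inner_def] at h2
    rw [← h2]
    congr 1; ext ω; simp [sq]
  · have h1 : Tendsto f atTop (𝓝 ((Lp.memLp Z).toLp Z)) := by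
      rw [Lp.toLp_coeFn]; exact hZ
    rw [hf] at h1
    exact (Lp.tendsto_Lp_iff_tendsto_eLpNorm'' _ hV Z (Lp.memLp Z)).1 h1

section fbm

variable {Ω : Type*} [MeasureSpace Ω] [IsProbabilityMeasure (ℙ : Measure Ω)]
  {B : ℝ → Ω → ℝ} {H : ℝ}

lemma fbm_memLp (hB : IsFractionalBrownianMotion B H) {t : ℝ} (ht : 0 ≤ t) :
    MemLp (B t) 2 (ℙ : Measure Ω) := by
  obtain ⟨v, hv⟩ := hB.gaussian_fdd 1 (fun _ => t) (fun _ => ht) (fun _ => 1)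
  simp only [Finset.univ_unique, Finset.sum_const, Finset.card_singleton, one_smul, one_mul] at hv
  have h := memLp_id_gaussianReal' (μ := 0) (v := v) 2 (by simp)
  rw [← hv, memLp_map_measure_iff (by fun_prop) (hB.measurable t).aemeasurable] at h
  exact h

lemma fbm_gaussian_pair (hB : IsFractionalBrownianMotion B H) {a b c d : ℝ} (ha : 0 ≤ a)
    (hb : 0 ≤ b) (hc : 0 ≤ c) (hd : 0 ≤ d) (α β : ℝ) :
    HasGaussianLaw (fun ω => (α * (B b ω - B a ω), β * (B d ω - B c ω))) (ℙ : Measure Ω) := by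
  have hm := hB.measurable
  have hM : Measurable (fun ω => (α * (B b ω - B a ω), β * (B d ω - B c ω))) := by fun_prop
  refine ⟨isGaussian_of_map_eq_gaussianReal fun L => ?_⟩
  obtain ⟨v, hv⟩ := hB.gaussian_fdd 4 ![b, a, d, c] (by intro i; fin_cases i <;> simpa)
    ![L (1, 0) * α, - (L (1, 0) * α), L (0, 1) * β, -(L (0, 1) * β)]
  refine ⟨0, v, ?_⟩
  rw [Measure.map_map (by fun_prop) hM, ← hv]
  congr 1
  ext ω
  have : ∀ x y : ℝ, L (x, y) = L (1, 0) * x + L (0, 1) * y := by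
    intro x y
    have : ((x, y) : ℝ × ℝ) = x • (1, 0) + y • (0, 1) := by simp
    rw [this, map_add, map_smul, map_smul]
    simp [mul_comm]
  have e := this (α * (B b ω - B a ω)) (β * (B d ω - B c ω))
  simp only [Function.comp, Fin.sum_univ_four]
  rw [e]
  simp
  ring

lemma fbm_cov (hB : IsFractionalBrownianMotion B H) {a b c d : ℝ} (ha : 0 ≤ a)
    (hb : 0 ≤ b) (hc : 0 ≤ c) (hd : 0 ≤ d) :
    ∫ ω, (B b ω - B a ω) * (B d ω - B c ω) ∂(ℙ : Measure Ω) = secD (2 * H) a b c d / 2 := by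
  have hi : ∀ s t : ℝ, 0 ≤ s → 0 ≤ t → Integrable (fun ω => B s ω * B t ω) (ℙ : Measure Ω) :=
    fun s t hs ht => (fbm_memLp hB hs).integrable_mul (fbm_memLp hB ht)
  have : ∀ ω, (B b ω - B a ω) * (B d ω - B c ω) =
      (B b ω * B d ω - B b ω * B c ω) - (B a ω * B d ω - B a ω * B c ω) := fun ω => by ring
  simp only [this]
  have i1 : Integrable (fun ω => B b ω * B d ω - B b ω * B c ω) (ℙ : Measure Ω) :=
    (hi b d hb hd).sub (hi b c hb hc)
  have i2 : Integrable (fun ω => B a ω * B d ω - B a ω * B c ω) (ℙ : Measure Ω) :=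
    (hi a d ha hd).sub (hi a c ha hc)
  rw [integral_sub i1 i2,
    integral_sub (hi b d hb hd) (hi b c hb hc), integral_sub (hi a d ha hd) (hi a c ha hc),
    hB.covariance _ _ hb hd, hB.covariance _ _ hb hc, hB.covariance _ _ ha hd,
    hB.covariance _ _ ha hc, secD, abs_sub_comm b c, abs_sub_comm a d, abs_sub_comm b d,
    abs_sub_comm a c]
  ring

lemma fbm_law (hB : IsFractionalBrownianMotion B H) {a b : ℝ} (ha : 0 ≤ a) (hb : 0 ≤ b) (α : ℝ)
    (h1 : α ^ 2 * (secD (2 * H) a b a b / 2) = 1) :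
    (ℙ : Measure Ω).map (fun ω => α * (B b ω - B a ω)) = gaussianReal 0 1 := by
  have hm := hB.measurable
  obtain ⟨v, hv⟩ := hB.gaussian_fdd 2 ![b, a] (by intro i; fin_cases i <;> simpa) ![α, -α]
  have e : (fun ω => ∑ i, ![α, -α] i * B (![b, a] i) ω) = fun ω => α * (B b ω - B a ω) := by
    ext ω; simp; ring
  rw [e] at hv
  rw [hv]
  have h2 := variance_fun_id_gaussianReal (μ := 0) (v := v)
  rw [variance_of_integral_eq_zero (by fun_prop) integral_id_gaussianReal, ← hv,
      integral_map (by fun_prop) (by fun_prop)] at h2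
  have h3 : ∫ ω, (α * (B b ω - B a ω)) ^ 2 ∂(ℙ : Measure Ω) = 1 := by
    rw [← h1, ← fbm_cov hB ha hb ha hb, ← integral_const_mul]
    congr 1; ext ω; ring
  rw [h3] at h2
  have : v = 1 := by exact_mod_cast h2.symm
  rw [this]

/-- Rescaled increment. -/
noncomputable def incr (B : ℝ → Ω → ℝ) (H : ℝ) (n k : ℕ) (ω : Ω) : ℝ :=
  (n : ℝ) ^ H * (B (((k : ℝ) + 1) / n) ω - B ((k : ℝ) / n) ω)

lemma hermiteVariation_eq (B : ℝ → Ω → ℝ) (H : ℝ) (q n : ℕ) (ω : Ω) :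
    hermiteVariation B H q n ω = ∑ k ∈ Finset.range n,
      ((Polynomial.hermite q).map (Int.castRingHom ℝ)).eval (incr B H n k ω) := by
  simp only [hermiteVariation, incr, Polynomial.aeval_def, Polynomial.eval₂_eq_eval_map,
    algebraMap_int_eq]

lemma incr_memLp (hB : IsFractionalBrownianMotion B H) (n k j : ℕ) :
    MemLp (incr B H n k) j (ℙ : Measure Ω) :=
  (fbm_gaussian_pair hB (a := (k:ℝ) / n) (b := ((k:ℝ) + 1) / n) (c := 0) (d := 0) (by positivity)
    (by positivity) le_rfl le_rfl ((n:ℝ) ^ H) 1).fst.memLp (by simp)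

lemma incr_hermite (hB : IsFractionalBrownianMotion B H) (hH : 0 < H) (q : ℕ) {n m : ℕ} (hn : 0 < n)
    (k l : ℕ) :
    ∫ ω, ((Polynomial.hermite q).map (Int.castRingHom ℝ)).eval (incr B H n k ω) *
      ((Polynomial.hermite q).map (Int.castRingHom ℝ)).eval (incr B H m l ω) ∂(ℙ : Measure Ω)
      = q.factorial * ((n:ℝ) ^ H * (m:ℝ) ^ H * (secD (2 * H) ((k:ℝ) / n) (((k:ℝ) + 1) / n)
          ((l:ℝ) / m) (((l:ℝ) + 1) / m) / 2)) ^ q := by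
  have hm := hB.measurable
  have hn' : (0:ℝ) < n := by exact_mod_cast hn
  have h0 : (0:ℝ) ≤ (k:ℝ) / n := by positivity
  have h1 : (0:ℝ) ≤ ((k:ℝ) + 1) / n := by positivity
  have h2 : (0:ℝ) ≤ (l:ℝ) / m := by positivity
  have h3 : (0:ℝ) ≤ ((l:ℝ) + 1) / m := by positivity
  have hlaw := fbm_law hB h0 h1 ((n:ℝ) ^ H) (by
    have e : ((k:ℝ) + 1) / n - k / n = (n:ℝ)⁻¹ := by field_simp; ring
    rw [secD, abs_sub_comm ((k:ℝ) / n) (((k:ℝ) + 1) / n), e, sub_self, sub_self, abs_zero,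
      Real.zero_rpow (by positivity), abs_of_pos (by positivity), Real.inv_rpow hn'.le,
      ← Real.rpow_mul_natCast hn'.le]
    push_cast
    rw [mul_comm H 2]
    have : (n:ℝ) ^ (2 * H) ≠ 0 := (Real.rpow_pos_of_pos hn' _).ne'
    field_simp
    ring)
  have := hermite_mul_hermite (X := incr B H n k) (Y := incr B H m l)
    (by unfold incr; fun_prop) (by unfold incr; fun_prop)
    (fbm_gaussian_pair hB h0 h1 h2 h3 ((n:ℝ) ^ H) ((m:ℝ) ^ H)) hlaw q
  rw [this, ← fbm_cov hB h0 h1 h2 h3, ← integral_const_mul]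
  congr 3
  ext ω
  simp only [incr]
  ring

lemma variation_inner (hB : IsFractionalBrownianMotion B H) (hH : 0 < H) (q : ℕ) {n m : ℕ}
    (hn : 0 < n) (hm : 0 < m) :
    ∫ ω, (hermiteVariation B H q n ω / (n:ℝ) ^ (1 - q * (1 - H))) *
      (hermiteVariation B H q m ω / (m:ℝ) ^ (1 - q * (1 - H))) ∂(ℙ : Measure Ω)
      = (q.factorial / 2 ^ q) * ∑ k ∈ Finset.range n, ∑ l ∈ Finset.range m,
        cellAvg (2 * H) n m k l ^ q / (n * m) := by
  have hn' : (0:ℝ) < n := by exact_mod_cast hn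
  have hm' : (0:ℝ) < m := by exact_mod_cast hm
  have e : ∀ x : ℝ, 0 < x → (x ^ H) ^ q / x ^ (1 - q * (1 - H)) = x ^ q / x := by
    intro x hx
    rw [← Real.rpow_mul_natCast hx.le, ← Real.rpow_sub hx, ← Real.rpow_natCast x q,
      ← Real.rpow_sub_one hx.ne']
    congr 1; ring
  have hint : ∀ k l, Integrable (fun ω =>
      ((Polynomial.hermite q).map (Int.castRingHom ℝ)).eval (incr B H n k ω) *
      ((Polynomial.hermite q).map (Int.castRingHom ℝ)).eval (incr B H m l ω)) (ℙ : Measure Ω) :=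
    fun k l => integrable_poly_mul_poly (incr_memLp hB n k) (incr_memLp hB m l) _ _
  simp only [hermiteVariation_eq, div_mul_div_comm, Finset.sum_mul_sum]
  rw [integral_div, integral_finsetSum _ fun k _ => integrable_finsetSum _ fun l _ => hint k l,
    Finset.sum_div, Finset.mul_sum]
  refine Finset.sum_congr rfl fun k _ => ?_
  rw [integral_finsetSum _ fun l _ => hint k l, Finset.sum_div, Finset.mul_sum]
  refine Finset.sum_congr rfl fun l _ => ?_
  rw [incr_hermite hB hH q hn, cellAvg]
  have e1 := e n hn'
  have e2 := e m hm'
  set D := secD (2 * H) ((k:ℝ) / n) (((k:ℝ) + 1) / n) ((l:ℝ) / m) (((l:ℝ) + 1) / m)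
  calc _ = (q.factorial / 2 ^ q) * D ^ q * (((n:ℝ) ^ H) ^ q / (n:ℝ) ^ (1 - q * (1 - H))) *
        (((m:ℝ) ^ H) ^ q / (m:ℝ) ^ (1 - q * (1 - H))) := by
          rw [mul_pow, mul_pow, div_pow]; ring
    _ = _ := by rw [e1, e2, mul_pow, mul_pow]; ring

end fbm

theorem stmt_1 {Ω : Type*} [MeasureSpace Ω] [IsProbabilityMeasure (ℙ : Measure Ω)]
    (q : ℕ) (hq : 2 ≤ q) (H : ℝ) (hH0 : 1 - 1 / (2 * q) < H) (hH1 : H < 1)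
    (B : ℝ → Ω → ℝ) (hB : IsFractionalBrownianMotion B H) :
    ∃ (c : ℝ) (Z : Ω → ℝ), 0 < c ∧ (∫ ω, (Z ω) ^ 2 ∂(ℙ : Measure Ω)) = 1 ∧
      Tendsto
        (fun n : ℕ => eLpNorm
          (fun ω => hermiteVariation B H q n ω / (c * (n : ℝ) ^ (1 - q * (1 - H))) - Z ω)
          2 (ℙ : Measure Ω))
        atTop (𝓝 0) := by
  have hq' : (2:ℝ) ≤ q := by exact_mod_cast hq
  have h2q : 1 - H < 1 / (2 * q) := by linarith
  rw [lt_div_iff₀ (by positivity)] at h2q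
  have hH34 : 1 / 2 < H := by nlinarith
  obtain ⟨L, hL, hlim⟩ := double_sum_tendsto (p := 2 * H) (by linarith) (by linarith) q
    (by nlinarith)
  have hpos : ∀ᶠ nm : ℕ × ℕ in (atTop ×ˢ atTop), 0 < nm.1 ∧ 0 < nm.2 :=
    (eventually_gt_atTop 0).prod_mk (eventually_gt_atTop 0)
  have hmem : ∀ n : ℕ, MemLp (fun ω => hermiteVariation B H q n ω / (n:ℝ) ^ (1 - q * (1 - H))) 2
      (ℙ : Measure Ω) := by
    intro n
    have h1 : ∀ k ∈ Finset.range n, MemLp (fun ω =>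
        ((Polynomial.hermite q).map (Int.castRingHom ℝ)).eval (incr B H n k ω)) 2
        (ℙ : Measure Ω) := fun k _ => memLp_two_poly (incr_memLp hB n k) _
    have h2 := (memLp_finsetSum (Finset.range n) h1).const_mul ((n:ℝ) ^ (1 - q * (1 - H)))⁻¹
    simpa only [hermiteVariation_eq, div_eq_inv_mul] using h2
  have hlim2 : Tendsto (fun nm : ℕ × ℕ => ∫ ω,
      (hermiteVariation B H q nm.1 ω / (nm.1:ℝ) ^ (1 - q * (1 - H))) *
      (hermiteVariation B H q nm.2 ω / (nm.2:ℝ) ^ (1 - q * (1 - H))) ∂(ℙ : Measure Ω))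
      (atTop ×ˢ atTop) (𝓝 (q.factorial / 2 ^ q * L)) := by
    have h3 := hlim.const_mul ((q.factorial : ℝ) / 2 ^ q)
    refine Tendsto.congr' ?_ h3
    filter_upwards [hpos] with nm hnm
    exact (variation_inner hB (by linarith) q hnm.1 hnm.2).symm
  obtain ⟨c, Z, hc, hZ, hT⟩ := exists_limit_of_inner (μ := (ℙ : Measure Ω))
    (fun n ω => hermiteVariation B H q n ω / (n:ℝ) ^ (1 - q * (1 - H))) hmem
    (A := q.factorial / 2 ^ q * L) (mul_pos (by positivity) hL) hlim2
  refine ⟨c, Z, hc, hZ, hT.congr fun n => ?_⟩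
  congr 1
  ext ω
  rw [inv_mul_eq_div, div_div, mul_comm c]
end
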